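/- arXiv:2005.02695 — 10 statements merged into one kernel-verified Lean document; each statement's English description precedes it below -/
import Mathlib

section
/- Let M be a nonzero linear subspace of Hol(𝔻) and let λ ∈ 𝔻. Then the following two conditions are equivalent: (i) λ ∉ Z(M) and the quotient space M/((S−λI)(M) ∩ M) has dimension 1; (ii) the function f_λ belongs to M for every f ∈ M such that f(λ) = 0. -/
noncomputable section

open Metric Set Filter Topology
open scoped Classical

/-- Functions holomorphic on the open unit disc, normalized to vanish outside it.
This is our model of `Hol(𝔻)`. -/
def HolDisc : Set (ℂ → ℂ) :=
  {f | DifferentiableOn ℂ f (Metric.ball (0:ℂ) 1) ∧ ∀ z ∉ Metric.ball (0:ℂ) 1, f z = 0}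

/-- The constant function `1` of `Hol(𝔻)` (normalized to vanish outside the disc). -/
def oneD : ℂ → ℂ := fun z => if z ∈ Metric.ball (0:ℂ) 1 then 1 else 0

/-- The shift `S`, `(Sf)(z) = z f(z)`, as a linear map. -/
def shiftL : (ℂ → ℂ) →ₗ[ℂ] (ℂ → ℂ) where
  toFun f := fun z => z * f z
  map_add' f g := by funext z; simp [mul_add]
  map_smul' c f := by funext z; simp [smul_eq_mul]; ring

/-- Division: `f_λ(z) = (f(z) - f(λ))/(z - λ)` for `z ≠ λ`, `f_λ(λ) = f'(λ)`,
normalized to vanish outside the disc.  `fdivB 0` is the backward shift `T`. -/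
def fdivB (lam : ℂ) (f : ℂ → ℂ) : ℂ → ℂ := fun z =>
  if z ∈ Metric.ball (0:ℂ) 1 then
    (if z = lam then deriv f lam else (f z - f lam) / (z - lam))
  else 0

/-- The reflected model of the shift `S⁻` on `H₀(ℂ ∖ 𝔻̄)`: a function `h` on `{|ζ|>1}`
vanishing at `∞` is represented by `k(w) = h(1/w)` (holomorphic on `𝔻`, `k 0 = 0`);
`S⁻` corresponds to `k ↦ (k(z) - k(0))/z - k'(0)·1`. -/
def negShiftF (k : ℂ → ℂ) : ℂ → ℂ := fun z => fdivB 0 k z - deriv k 0 * oneD z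

/-- `n`-th Taylor coefficient at the origin. -/
def tCoeff (n : ℕ) (f : ℂ → ℂ) : ℂ := iteratedDeriv n f 0 / (Nat.factorial n)

lemma fdivB_factor {f : ℂ → ℂ} (hf : f ∈ HolDisc) {lam : ℂ} (h0 : f lam = 0) (z : ℂ) :
    (z - lam) * fdivB lam f z = f z := by
  unfold fdivB
  by_cases hz : z ∈ Metric.ball (0:ℂ) 1
  · rw [if_pos hz]
    by_cases h : z = lam
    · subst h; simp [h0]
    · rw [if_neg h, h0, sub_zero, mul_div_cancel₀ _ (sub_ne_zero.2 h)]
  · rw [if_neg hz, hf.2 z hz, mul_zero]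

lemma fdivB_mul {g : ℂ → ℂ} (hg : g ∈ HolDisc) {lam : ℂ} (hlam : lam ∈ Metric.ball (0:ℂ) 1) :
    fdivB lam (fun z => (z - lam) * g z) = g := by
  funext z
  unfold fdivB
  by_cases hz : z ∈ Metric.ball (0:ℂ) 1
  · rw [if_pos hz]
    by_cases h : z = lam
    · subst h
      have hd : DifferentiableAt ℂ g z := hg.1.differentiableAt (Metric.isOpen_ball.mem_nhds hz)
      have := ((hasDerivAt_id z).sub_const z).mul hd.hasDerivAt
      have h2 : HasDerivAt (fun w => (w - z) * g w) (g z) z := by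
        refine this.congr_deriv ?_
        simp
      rw [if_pos rfl, h2.deriv]
    · have := sub_ne_zero.2 h
      rw [if_neg h]
      field_simp
      simp
  · rw [if_neg hz, hg.2 z hz]

lemma mem_map_iff (M : Submodule ℂ (ℂ → ℂ)) (lam : ℂ) (f : ℂ → ℂ) :
    f ∈ Submodule.map (shiftL - lam • (LinearMap.id : (ℂ → ℂ) →ₗ[ℂ] (ℂ → ℂ))) M ↔
      ∃ g ∈ M, f = fun z => (z - lam) * g z := by
  rw [Submodule.mem_map]
  have key : ∀ g : ℂ → ℂ, (shiftL - lam • (LinearMap.id : (ℂ → ℂ) →ₗ[ℂ] (ℂ → ℂ))) g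
      = fun z => (z - lam) * g z := by
    intro g; funext z; simp [shiftL, sub_mul]
  simp only [key]
  constructor <;> rintro ⟨g, hg, h⟩ <;> exact ⟨g, hg, h.symm⟩

lemma exists_nonvanish (M : Submodule ℂ (ℂ → ℂ)) (hMhol : (M : Set (ℂ → ℂ)) ⊆ HolDisc)
    (hM0 : M ≠ ⊥) (lam : ℂ) (hlam : lam ∈ Metric.ball (0:ℂ) 1)
    (H : ∀ f ∈ M, f lam = 0 → fdivB lam f ∈ M) : ∃ f ∈ M, f lam ≠ 0 := by
  by_contra! hz
  apply hM0
  rw [eq_bot_iff]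
  intro f hf
  have han : ∀ g ∈ M, AnalyticOnNhd ℂ g (Metric.ball (0:ℂ) 1) := fun g hg =>
    (hMhol hg).1.analyticOnNhd Metric.isOpen_ball
  have hn : ∀ n : ℕ, ∃ g ∈ M, ∀ z, f z = (z - lam) ^ n * g z := by
    intro n
    induction n with
    | zero => exact ⟨f, hf, by simp⟩
    | succ n ih =>
      obtain ⟨g, hg, h⟩ := ih
      refine ⟨_, H g hg (hz g hg), fun z => ?_⟩
      rw [h, pow_succ, mul_assoc, fdivB_factor (hMhol hg) (hz g hg)]
  have htop : analyticOrderAt f lam = ⊤ := by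
    rw [ENat.eq_top_iff_forall_ge]
    intro n
    rw [natCast_le_analyticOrderAt (han f hf lam hlam)]
    obtain ⟨g, hg, h⟩ := hn n
    exact ⟨g, han g hg lam hlam, Eventually.of_forall fun z => by simp [h]⟩
  rw [analyticOrderAt_eq_top] at htop
  have h0 := (han f hf).eqOn_zero_of_preconnected_of_eventuallyEq_zero
    (convex_ball (0:ℂ) 1).isPreconnected hlam htop
  rw [Submodule.mem_bot]
  funext z
  by_cases h : z ∈ Metric.ball (0:ℂ) 1
  · exact h0 h
  · exact (hMhol hf).2 z h

/-- Let `M` be a nonzero linear subspace of `Hol(𝔻)` and `λ ∈ 𝔻`.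
The following are equivalent:
(i) `λ ∉ Z(M)` and `dim M/((S-λI)(M) ∩ M) = 1`;
(ii) `f_λ ∈ M` for every `f ∈ M` with `f(λ) = 0`. -/
theorem statement0 (M : Submodule ℂ (ℂ → ℂ)) (hMhol : (M : Set (ℂ → ℂ)) ⊆ HolDisc)
    (hM0 : M ≠ ⊥) (lam : ℂ) (hlam : lam ∈ Metric.ball (0:ℂ) 1) :
    ((∃ f ∈ M, f lam ≠ 0) ∧
      Module.rank ℂ
        (↥M ⧸ Submodule.comap M.subtype
          (Submodule.map (shiftL - lam • (LinearMap.id : (ℂ → ℂ) →ₗ[ℂ] (ℂ → ℂ))) M ⊓ M)) = 1)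
    ↔ (∀ f ∈ M, f lam = 0 → fdivB lam f ∈ M) := by
  constructor
  · rintro ⟨⟨e, he, hne⟩, hr⟩ f hf hf0
    have hfr := Module.rank_eq_one_iff_finrank_eq_one.1 hr
    set N := Submodule.comap M.subtype
          (Submodule.map (shiftL - lam • (LinearMap.id : (ℂ → ℂ) →ₗ[ℂ] (ℂ → ℂ))) M ⊓ M) with hN
    have hNz : ∀ x : M, x ∈ N → (x : ℂ → ℂ) lam = 0 := by
      intro x hx
      obtain ⟨g, _, h⟩ := (mem_map_iff M lam x).1 hx.1
      rw [h]; simp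
    have hq : (Submodule.Quotient.mk ⟨e, he⟩ : M ⧸ N) ≠ 0 := by
      intro h
      exact hne (hNz _ ((Submodule.Quotient.mk_eq_zero N).1 h))
    obtain ⟨c, hc⟩ := (finrank_eq_one_iff_of_nonzero' _ hq).1 hfr (Submodule.Quotient.mk ⟨f, hf⟩)
    rw [← Submodule.Quotient.mk_smul, Submodule.Quotient.eq] at hc
    have h1 := hNz _ hc
    have hc0 : c = 0 := by simpa [hf0, hne] using h1
    subst hc0
    have h2 : (⟨f, hf⟩ : M) ∈ N := by
      have := N.neg_mem hc
      simpa using this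
    obtain ⟨g, hg, h⟩ := (mem_map_iff M lam f).1 h2.1
    rw [h, fdivB_mul (hMhol hg) hlam]
    exact hg
  · intro H
    have hex := exists_nonvanish M hMhol hM0 lam hlam H
    refine ⟨hex, ?_⟩
    obtain ⟨e, he, hne⟩ := hex
    let φ : M →ₗ[ℂ] ℂ := (LinearMap.proj lam : (ℂ → ℂ) →ₗ[ℂ] ℂ).comp M.subtype
    have hφ : Function.Surjective φ := by
      apply LinearMap.surjective
      intro h
      exact hne (by simpa [φ] using LinearMap.congr_fun h ⟨e, he⟩)
    have hker : Submodule.comap M.subtype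
          (Submodule.map (shiftL - lam • (LinearMap.id : (ℂ → ℂ) →ₗ[ℂ] (ℂ → ℂ))) M ⊓ M)
          = LinearMap.ker φ := by
      ext x
      rw [Submodule.mem_comap, Submodule.mem_inf, Submodule.subtype_apply, mem_map_iff,
        LinearMap.mem_ker]
      constructor
      · rintro ⟨⟨g, _, h⟩, _⟩
        change (x : ℂ → ℂ) lam = 0
        rw [h]; simp
      · intro h
        have h : (x : ℂ → ℂ) lam = 0 := h
        exact ⟨⟨_, H x x.2 h, funext fun z => (fdivB_factor (hMhol x.2) h z).symm⟩, x.2⟩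
    rw [hker, (φ.quotKerEquivOfSurjective hφ).rank_eq, Module.rank_self]
end
end

section
/- A nonzero linear subspace M of Hol(𝔻) has the division property if and only if the following two conditions hold: (i) Z(M) = ∅; (ii) the quotient space M/((S−λI)(M) ∩ M) has dimension 1 for every λ ∈ 𝔻. -/
noncomputable section

open Metric Set Filter Topology
open scoped Classical

lemma fdivB_of_mem (lam : ℂ) (hl : lam ∈ Metric.ball (0:ℂ) 1) (h : ℂ → ℂ) (hh : h ∈ HolDisc) :
    fdivB lam (fun z => (z - lam) * h z) = h := by
  funext z
  unfold fdivB
  split_ifs with hz hzl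
  · subst hzl
    have hd : DifferentiableAt ℂ h z := hh.1.differentiableAt (Metric.isOpen_ball.mem_nhds hz)
    have h1 : HasDerivAt (fun w => (w - z) * h w) (1 * h z + (z - z) * deriv h z) z :=
      ((hasDerivAt_id z).sub_const z).mul hd.hasDerivAt
    rw [h1.deriv]; simp
  · have : z - lam ≠ 0 := sub_ne_zero.mpr hzl
    simp; field_simp
  · exact (hh.2 z hz).symm

lemma eq_mul_fdivB (lam : ℂ) (f : ℂ → ℂ) (hf : f ∈ HolDisc) (h0 : f lam = 0) :
    (fun z => (z - lam) * fdivB lam f z) = f := by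
  funext z
  unfold fdivB
  split_ifs with hz hzl
  · subst hzl; simp [h0]
  · have : z - lam ≠ 0 := sub_ne_zero.mpr hzl
    rw [h0]; field_simp; simp
  · simp [hf.2 z hz]

lemma hol_an (lam : ℂ) (hl : lam ∈ Metric.ball (0:ℂ) 1) (f : ℂ → ℂ) (hf : f ∈ HolDisc) :
    AnalyticAt ℂ f lam :=
  hf.1.analyticAt (Metric.isOpen_ball.mem_nhds hl)

lemma exists_nonvan (M : Submodule ℂ (ℂ → ℂ)) (hMhol : (M : Set (ℂ → ℂ)) ⊆ HolDisc)
    (lam : ℂ) (hl : lam ∈ Metric.ball (0:ℂ) 1)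
    (hdiv : ∀ f ∈ M, f lam = 0 → fdivB lam f ∈ M) (n : ℕ) :
    ∀ f ∈ M, analyticOrderAt f lam = n → ∃ g ∈ M, g lam ≠ 0 := by
  induction n with
  | zero =>
    intro f hf h
    refine ⟨f, hf, ?_⟩
    exact (hol_an lam hl f (hMhol hf)).analyticOrderAt_eq_zero.mp (by simpa using h)
  | succ n ih =>
    intro f hf h
    by_cases h0 : f lam = 0
    · have hg := hdiv f hf h0
      refine ih _ hg ?_
      have e := eq_mul_fdivB lam f (hMhol hf) h0
      have hid : AnalyticAt ℂ (fun z : ℂ => z - lam) lam := by fun_prop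
      have h1 : analyticOrderAt (fun z : ℂ => z - lam) lam = (1 : ℕ) := by
        rw [hid.analyticOrderAt_eq_natCast]
        exact ⟨fun _ => 1, analyticAt_const, one_ne_zero, by simp⟩
      have h2 := analyticOrderAt_mul hid (hol_an lam hl _ (hMhol hg))
      have e' : (fun z : ℂ => z - lam) * fdivB lam f = f := e
      rw [e', h, h1] at h2
      cases hk : analyticOrderAt (fdivB lam f) lam with
      | top => rw [hk] at h2; simp at h2
      | coe k => rw [hk] at h2; norm_cast at h2 ⊢; omega
    · exact ⟨f, hf, h0⟩

lemma order_fin (lam : ℂ) (hl : lam ∈ Metric.ball (0:ℂ) 1) (f : ℂ → ℂ) (hf : f ∈ HolDisc)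
    (hne : f ≠ 0) : ∃ n : ℕ, analyticOrderAt f lam = n := by
  cases hk : analyticOrderAt f lam with
  | coe k => exact ⟨k, rfl⟩
  | top =>
    exfalso
    apply hne
    rw [analyticOrderAt_eq_top] at hk
    have := (hf.1.analyticOnNhd Metric.isOpen_ball).eqOn_zero_of_preconnected_of_eventuallyEq_zero
      (convex_ball (0:ℂ) 1).isPreconnected hl hk
    funext z
    by_cases hz : z ∈ Metric.ball (0:ℂ) 1
    · exact this hz
    · exact hf.2 z hz

lemma mem_N (M : Submodule ℂ (ℂ → ℂ)) (lam : ℂ) (f : M) :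
    f ∈ Submodule.comap M.subtype
      (Submodule.map (shiftL - lam • (LinearMap.id : (ℂ → ℂ) →ₗ[ℂ] (ℂ → ℂ))) M ⊓ M) ↔
    ∃ h ∈ M, (fun z => (z - lam) * h z) = (f : ℂ → ℂ) := by
  have key : ∀ h : ℂ → ℂ, (shiftL - lam • (LinearMap.id : (ℂ → ℂ) →ₗ[ℂ] (ℂ → ℂ))) h
      = fun z => (z - lam) * h z := by
    intro h; funext z; simp [shiftL, sub_mul]
  simp only [Submodule.mem_comap, Submodule.mem_inf, Submodule.mem_map, key,
    Submodule.subtype_apply, f.2, and_true]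

theorem statement1 (M : Submodule ℂ (ℂ → ℂ)) (hMhol : (M : Set (ℂ → ℂ)) ⊆ HolDisc)
    (hM0 : M ≠ ⊥) :
    (∀ lam ∈ Metric.ball (0:ℂ) 1, ∀ f ∈ M, f lam = 0 → fdivB lam f ∈ M)
    ↔ ((∀ lam ∈ Metric.ball (0:ℂ) 1, ∃ f ∈ M, f lam ≠ 0) ∧
        ∀ lam ∈ Metric.ball (0:ℂ) 1,
          Module.rank ℂ
            (↥M ⧸ Submodule.comap M.subtype
              (Submodule.map (shiftL - lam • (LinearMap.id : (ℂ → ℂ) →ₗ[ℂ] (ℂ → ℂ))) M ⊓ M))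
            = 1) := by
  constructor
  · intro hdiv
    have hi : ∀ lam ∈ Metric.ball (0:ℂ) 1, ∃ f ∈ M, f lam ≠ 0 := by
      intro lam hl
      obtain ⟨f, hf, hne⟩ := (Submodule.ne_bot_iff M).mp hM0
      obtain ⟨n, hn⟩ := order_fin lam hl f (hMhol hf) hne
      exact exists_nonvan M hMhol lam hl (hdiv lam hl) n f hf hn
    refine ⟨hi, fun lam hl => ?_⟩
    obtain ⟨g, hg, hgne⟩ := hi lam hl
    let ev : M →ₗ[ℂ] ℂ := (LinearMap.proj lam : (ℂ → ℂ) →ₗ[ℂ] ℂ).comp M.subtype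
    have hev : ∀ f : M, ev f = (f : ℂ → ℂ) lam := fun f => rfl
    have hs : Function.Surjective ev := by
      intro c
      refine ⟨(c / g lam) • ⟨g, hg⟩, ?_⟩
      rw [map_smul, hev]
      simp [hgne]
    have hN : Submodule.comap M.subtype
        (Submodule.map (shiftL - lam • (LinearMap.id : (ℂ → ℂ) →ₗ[ℂ] (ℂ → ℂ))) M ⊓ M)
        = LinearMap.ker ev := by
      ext f
      rw [mem_N, LinearMap.mem_ker, hev]
      constructor
      · rintro ⟨h, -, e⟩
        rw [← e]; simp
      · intro h0
        exact ⟨_, hdiv lam hl f f.2 h0, eq_mul_fdivB lam f (hMhol f.2) h0⟩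
    rw [hN, (ev.quotKerEquivOfSurjective hs).rank_eq, Module.rank_self]
  · rintro ⟨hi, hr⟩ lam hl f hf h0
    obtain ⟨g, hg, hgne⟩ := hi lam hl
    have hr1 := hr lam hl
    have hker : ∀ u : M, u ∈ Submodule.comap M.subtype
        (Submodule.map (shiftL - lam • (LinearMap.id : (ℂ → ℂ) →ₗ[ℂ] (ℂ → ℂ))) M ⊓ M) →
        (u : ℂ → ℂ) lam = 0 := by
      intro u hu
      obtain ⟨h, -, e⟩ := (mem_N M lam u).mp hu
      rw [← e]; simp
    have hmem := mem_N M lam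
    generalize Submodule.comap M.subtype
        (Submodule.map (shiftL - lam • (LinearMap.id : (ℂ → ℂ) →ₗ[ℂ] (ℂ → ℂ))) M ⊓ M) = N
        at hr1 hker hmem
    have hg0 : N.mkQ ⟨g, hg⟩ ≠ 0 := by
      intro h
      rw [Submodule.mkQ_apply, Submodule.Quotient.mk_eq_zero] at h
      exact hgne (hker _ h)
    have hfr : Module.finrank ℂ (M ⧸ N) = 1 := Module.rank_eq_one_iff_finrank_eq_one.mp hr1
    obtain ⟨c, hc⟩ := (finrank_eq_one_iff_of_nonzero' _ hg0).mp hfr (N.mkQ ⟨f, hf⟩)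
    rw [← map_smul, Submodule.mkQ_apply, Submodule.mkQ_apply, Submodule.Quotient.eq] at hc
    have h1 := hker _ hc
    simp [h0, hgne] at h1
    subst h1
    have h2 : (⟨f, hf⟩ : M) ∈ N := by simpa using hc
    obtain ⟨h, hh, e⟩ := (hmem _).mp h2
    have e' : (fun z => (z - lam) * h z) = f := e
    rw [← e', fdivB_of_mem lam hl h (hMhol hh)]
    exact hh
end
end

section
/- Let E ≠ {0} be a z-invariant linear subspace of Hol(𝔻) with T(E) ⊂ E such that I_E − λT|_E : E → E is bijective for every λ ∈ 𝔻, let λ ∈ 𝔻, let M be a nontrivial linear subspace of E, and let π : E → E/M be the canonical surjection. Then: (i) λ ∉ Z(M) if and only if the linear map π ∘ (S|_E − λI_E) : E → E/M is onto; (ii) M has the division property at λ if and only if Ker(π ∘ (S|_E − λI_E)) ⊂ M, and in this case π ∘ (S|_E − λI_E) is onto and the map U_λ : E/M → E/M defined by U_λ(π(S f − λf)) = π(f) for f ∈ E is well-defined and onto. -/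
noncomputable section

open Metric Set Filter Topology
open scoped Classical

lemma aux_uniq {lam : ℂ} (hlam : lam ∈ Metric.ball (0:ℂ) 1) {f g : ℂ → ℂ} (hg : g ∈ HolDisc)
    (h : ∀ z ∈ Metric.ball (0:ℂ) 1, (z - lam) * g z = f z - f lam) : fdivB lam f = g := by
  funext z
  unfold fdivB
  split_ifs with hz hzl
  · subst hzl
    have hnb : Metric.ball (0:ℂ) 1 ∈ 𝓝 z := Metric.isOpen_ball.mem_nhds hz
    have hgd : DifferentiableAt ℂ g z := (hg.1 z hz).differentiableAt hnb
    have hd : HasDerivAt (fun w => f z + (w - z) * g w) (g z) z := by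
      have := (((hasDerivAt_id z).sub_const z).mul hgd.hasDerivAt).const_add (f z)
      exact HasDerivAt.congr_deriv this (by simp)
    have he : f =ᶠ[𝓝 z] (fun w => f z + (w - z) * g w) := by
      filter_upwards [hnb] with w hw
      rw [h w hw]; ring
    exact (hd.congr_of_eventuallyEq he).deriv
  · have := h z hz
    rw [← this]
    field_simp [sub_ne_zero.mpr hzl]
  · exact (hg.2 z hz).symm

lemma aux_div (E : Submodule ℂ (ℂ → ℂ))
    (TE : ↥E →ₗ[ℂ] ↥E) (hTE : ∀ f : ↥E, (↑(TE f) : ℂ → ℂ) = fdivB 0 ↑f)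
    (hbij : ∀ μ ∈ Metric.ball (0:ℂ) 1,
      Function.Bijective ((LinearMap.id : ↥E →ₗ[ℂ] ↥E) - μ • TE))
    (lam : ℂ) (hlam : lam ∈ Metric.ball (0:ℂ) 1) (f : ↥E) :
    ∃ g : ↥E, ∀ z ∈ Metric.ball (0:ℂ) 1,
      (z - lam) * (g : ℂ → ℂ) z = (f : ℂ → ℂ) z - (f : ℂ → ℂ) lam := by
  obtain ⟨g, hg⟩ := (hbij lam hlam).2 (TE f)
  refine ⟨g, ?_⟩
  have key : ∀ z ∈ Metric.ball (0:ℂ) 1, (z - lam) * (g : ℂ → ℂ) z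
      = (f : ℂ → ℂ) z - (f : ℂ → ℂ) 0 - lam * (g : ℂ → ℂ) 0 := by
    intro z hz
    have h1 : (g : ℂ → ℂ) z - lam * fdivB 0 (g : ℂ → ℂ) z = fdivB 0 (f : ℂ → ℂ) z := by
      rw [← hTE, ← hTE, ← hg]; simp
    by_cases h0 : z = 0
    · subst h0; ring
    · simp only [fdivB, hz, h0, if_true, if_false, sub_zero] at h1
      field_simp at h1
      linear_combination h1
  intro z hz
  have h2 := key lam hlam
  rw [key z hz]
  linear_combination -h2

lemma aux_zero (M : Submodule ℂ (ℂ → ℂ)) (hM : (M : Set (ℂ → ℂ)) ⊆ HolDisc) (hM0 : M ≠ ⊥)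
    (lam : ℂ) (hlam : lam ∈ Metric.ball (0:ℂ) 1)
    (hdiv : ∀ f ∈ M, f lam = 0 → fdivB lam f ∈ M) : ∃ f ∈ M, f lam ≠ 0 := by
  by_contra! hz
  have hnb : Metric.ball (0:ℂ) 1 ∈ 𝓝 lam := Metric.isOpen_ball.mem_nhds hlam
  have main : ∀ n : ℕ, ∀ f ∈ M, ∀ g : ℂ → ℂ, ContinuousAt g lam → g lam ≠ 0 →
      (∀ᶠ z in 𝓝[≠] lam, f z = (z - lam) ^ n * g z) → False := by
    intro n
    induction n with
    | zero =>
      intro f hf g hg hg0 h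
      have hfc : ContinuousAt f lam := ((hM hf).1 lam hlam).differentiableAt hnb |>.continuousAt
      have h' : f =ᶠ[𝓝[≠] lam] g := by
        filter_upwards [h] with z hz
        simpa using hz
      have := (hfc.eventuallyEq_nhds_iff_eventuallyEq_nhdsNE hg).1 h'
      exact hg0 (this.eq_of_nhds ▸ hz f hf)
    | succ n ih =>
      intro f hf g hg hg0 h
      refine ih (fdivB lam f) (hdiv f hf (hz f hf)) g hg hg0 ?_
      filter_upwards [h, self_mem_nhdsWithin, mem_nhdsWithin_of_mem_nhds hnb] with z h1 h2 h3
      have h2' : z ≠ lam := h2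
      simp only [fdivB, h3, h2', if_true, if_false, hz f hf, h1, sub_zero]
      rw [pow_succ, div_eq_iff (sub_ne_zero.mpr h2')]; ring
  obtain ⟨f, hf, hfne⟩ := Submodule.exists_mem_ne_zero_of_ne_bot hM0
  have han : AnalyticOnNhd ℂ f (Metric.ball (0:ℂ) 1) := (hM hf).1.analyticOnNhd Metric.isOpen_ball
  by_cases hev : ∀ᶠ z in 𝓝 lam, f z = 0
  · apply hfne
    have := han.eqOn_zero_of_preconnected_of_eventuallyEq_zero
      (convex_ball (0:ℂ) 1).isPreconnected hlam hev
    funext z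
    by_cases hzb : z ∈ Metric.ball (0:ℂ) 1
    · exact this hzb
    · exact (hM hf).2 z hzb
  · obtain ⟨n, g, hg, hg0, h⟩ := (han lam hlam).exists_eventuallyEq_pow_smul_nonzero_iff.2 hev
    exact main n f hf g hg.continuousAt hg0 (by
      filter_upwards [mem_nhdsWithin_of_mem_nhds h] with z hz
      simpa using hz)

/-- (Proposition 2.5 (i)-(ii)) -/
theorem statement2
    (E M : Submodule ℂ (ℂ → ℂ))
    (hEhol : (E : Set (ℂ → ℂ)) ⊆ HolDisc) (hE0 : E ≠ ⊥)
    (hES : ∀ f ∈ E, shiftL f ∈ E)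
    (TE : ↥E →ₗ[ℂ] ↥E) (hTE : ∀ f : ↥E, (↑(TE f) : ℂ → ℂ) = fdivB 0 ↑f)
    (hbij : ∀ μ ∈ Metric.ball (0:ℂ) 1,
      Function.Bijective ((LinearMap.id : ↥E →ₗ[ℂ] ↥E) - μ • TE))
    (lam : ℂ) (hlam : lam ∈ Metric.ball (0:ℂ) 1)
    (hME : M ≤ E) (hM0 : M ≠ ⊥) (hMne : M ≠ E) :
    -- (i) : λ ∉ Z(M) iff π ∘ (S|E - λ) is onto
    ((∃ f ∈ M, f lam ≠ 0) ↔
      Function.Surjective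
        ((M.comap E.subtype).mkQ ∘ₗ
          (shiftL.restrict hES - lam • (LinearMap.id : ↥E →ₗ[ℂ] ↥E))))
    -- (ii) first part : division property at λ iff Ker(π ∘ (S|E - λ)) ⊆ M
    ∧ ((∀ f ∈ M, f lam = 0 → fdivB lam f ∈ M) ↔
        LinearMap.ker ((M.comap E.subtype).mkQ ∘ₗ
          (shiftL.restrict hES - lam • (LinearMap.id : ↥E →ₗ[ℂ] ↥E))) ≤ M.comap E.subtype)
    -- (ii) second part : in that case π ∘ (S|E - λ) is onto and U_λ is well defined and onto
    ∧ ((∀ f ∈ M, f lam = 0 → fdivB lam f ∈ M) →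
        Function.Surjective
          ((M.comap E.subtype).mkQ ∘ₗ
            (shiftL.restrict hES - lam • (LinearMap.id : ↥E →ₗ[ℂ] ↥E)))
        ∧ ∃ U : (↥E ⧸ M.comap E.subtype) →ₗ[ℂ] (↥E ⧸ M.comap E.subtype),
            (∀ f : ↥E,
              U ((M.comap E.subtype).mkQ (shiftL.restrict hES f - lam • f)) =
                (M.comap E.subtype).mkQ f)
            ∧ Function.Surjective U) := by
  set φ := (M.comap E.subtype).mkQ ∘ₗ
          (shiftL.restrict hES - lam • (LinearMap.id : ↥E →ₗ[ℂ] ↥E)) with hφ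
  have hφa : ∀ f : ↥E, φ f = (M.comap E.subtype).mkQ (shiftL.restrict hES f - lam • f) := by
    intro f; simp [hφ]
  have hval : ∀ (f : ↥E) (z : ℂ), ((shiftL.restrict hES f - lam • f : ↥E) : ℂ → ℂ) z
      = (z - lam) * (f : ℂ → ℂ) z := by
    intro f z
    simp [shiftL, sub_mul]
  have hdivE := aux_div E TE hTE hbij
  have hE2 : ∀ f : ↥E, (f : ℂ → ℂ) lam = 0 → ∃ g : ↥E, shiftL.restrict hES g - lam • g = f := by
    intro f hf
    obtain ⟨g, hg⟩ := hdivE lam hlam f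
    refine ⟨g, Subtype.ext (funext fun z => ?_)⟩
    rw [hval]
    by_cases hz : z ∈ Metric.ball (0:ℂ) 1
    · rw [hg z hz, hf, sub_zero]
    · rw [(hEhol g.2).2 z hz, (hEhol f.2).2 z hz, mul_zero]
  have huniq : ∀ g : ↥E, fdivB lam ((shiftL.restrict hES g - lam • g : ↥E) : ℂ → ℂ) = g := by
    intro g
    refine aux_uniq hlam (hEhol g.2) fun z _ => ?_
    rw [hval, hval]; ring
  have hone : ∃ f : ↥E, (f : ℂ → ℂ) lam ≠ 0 := by
    obtain ⟨f, hf, h⟩ := aux_zero E hEhol hE0 lam hlam (fun f hf h0 => by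
      obtain ⟨g, hg⟩ := hE2 ⟨f, hf⟩ h0
      have := huniq g
      rw [hg] at this
      change fdivB lam f = g at this
      rw [this]; exact g.2)
    exact ⟨⟨f, hf⟩, h⟩
  have hi : (∃ f ∈ M, f lam ≠ 0) → Function.Surjective φ := by
    rintro ⟨m, hm, hm0⟩ q
    obtain ⟨h, rfl⟩ := Submodule.mkQ_surjective _ q
    let m' : ↥E := ⟨m, hME hm⟩
    obtain ⟨g, hg⟩ := hE2 (h - ((h : ℂ → ℂ) lam / m lam) • m') (by
      simp [m', hm0])
    refine ⟨g, ?_⟩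
    rw [hφa, hg, map_sub, map_smul]
    have : (M.comap E.subtype).mkQ m' = 0 := by
      rw [Submodule.mkQ_apply, Submodule.Quotient.mk_eq_zero]
      exact hm
    rw [this]; simp
  have hker : (∀ f ∈ M, f lam = 0 → fdivB lam f ∈ M) →
      LinearMap.ker φ ≤ M.comap E.subtype := by
    intro hdiv g hg
    rw [LinearMap.mem_ker, hφa, Submodule.mkQ_apply, Submodule.Quotient.mk_eq_zero] at hg
    have := hdiv _ hg (by
      change ((shiftL.restrict hES g - lam • g : ↥E) : ℂ → ℂ) lam = 0
      rw [hval]; simp)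
    change fdivB lam ((shiftL.restrict hES g - lam • g : ↥E) : ℂ → ℂ) ∈ M at this
    rw [huniq] at this
    exact this
  refine ⟨⟨hi, ?_⟩, ⟨hker, ?_⟩, ?_⟩
  · intro hs
    obtain ⟨f, hf⟩ := hone
    obtain ⟨g, hg⟩ := hs ((M.comap E.subtype).mkQ f)
    rw [hφa, Submodule.mkQ_apply, Submodule.mkQ_apply, Submodule.Quotient.eq] at hg
    refine ⟨_, hg, ?_⟩
    change ((shiftL.restrict hES g - lam • g : ↥E) : ℂ → ℂ) lam - (f : ℂ → ℂ) lam ≠ 0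
    rw [hval]; simpa using hf
  · intro hk f hf h0
    obtain ⟨g, hg⟩ := hE2 ⟨f, hME hf⟩ h0
    have h1 := huniq g
    rw [hg] at h1
    change fdivB lam f = g at h1
    rw [h1]
    apply hk
    rw [LinearMap.mem_ker, hφa, Submodule.mkQ_apply, Submodule.Quotient.mk_eq_zero, hg]
    exact hf
  · intro hdiv
    have hs := hi (aux_zero M (fun f hf => hEhol (hME hf)) hM0 lam hlam hdiv)
    refine ⟨hs, ?_⟩
    obtain ⟨s, hs'⟩ := φ.exists_rightInverse_of_surjective (LinearMap.range_eq_top.2 hs)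
    have hU : ∀ f : ↥E, ((M.comap E.subtype).mkQ ∘ₗ s)
        ((M.comap E.subtype).mkQ (shiftL.restrict hES f - lam • f)) =
          (M.comap E.subtype).mkQ f := by
      intro f
      rw [← hφa, LinearMap.comp_apply, Submodule.mkQ_apply, Submodule.mkQ_apply,
        Submodule.Quotient.eq]
      apply hker hdiv
      have := LinearMap.congr_fun hs' (φ f)
      simp only [LinearMap.comp_apply, LinearMap.id_apply] at this
      rw [LinearMap.mem_ker, map_sub, this, sub_self]
    refine ⟨(M.comap E.subtype).mkQ ∘ₗ s, hU, fun q => ?_⟩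
    obtain ⟨f, rfl⟩ := Submodule.mkQ_surjective _ q
    exact ⟨_, hU f⟩
end
end

section
/- Let E ≠ {0} be a z-invariant linear subspace of Hol(𝔻) with T(E) ⊂ E such that I_E − λT|_E : E → E is bijective for every λ ∈ 𝔻, let M be a nontrivial linear subspace of E, let π : E → E/M be the canonical surjection, and assume M has the division property at some λ ∈ 𝔻, with U_λ : E/M → E/M the onto linear map satisfying U_λ ∘ π ∘ (S|_E − λI_E) = π. Then for μ ∈ 𝔻, M has the division property at μ if and only if the map I_{E/M} − (μ − λ)U_λ is one-to-one; and in this case I_{E/M} − (μ − λ)U_λ is a bijection of E/M and U_μ = U_λ ∘ (I_{E/M} − (μ − λ)U_λ)^{-1}. -/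
noncomputable section

open Metric Set Filter Topology
open scoped Classical

theorem aux_fdiv {a : ℂ} (ha : a ∈ Metric.ball (0:ℂ) 1) {f g : ℂ → ℂ} (hg : g ∈ HolDisc)
    (h : ∀ z, f z = (z - a) * g z) : fdivB a f = g := by
  have hfa : f a = 0 := by rw [h]; simp
  funext z
  unfold fdivB
  split_ifs with h1 h2
  · subst h2
    have hd : HasDerivAt g (deriv g z) z :=
      (hg.1.differentiableAt (Metric.isOpen_ball.mem_nhds ha)).hasDerivAt
    have h3 := ((hasDerivAt_id z).sub_const z).mul hd
    have h4 : f = (fun x => id x - z) * g := by funext w; simp [h w]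
    rw [h4, h3.deriv]; simp
  · have : z - a ≠ 0 := sub_ne_zero.2 h2
    rw [hfa, h z]; field_simp; simp
  · exact (hg.2 z h1).symm

theorem aux_T (f : ℂ → ℂ) {z : ℂ} (hz : z ∈ Metric.ball (0:ℂ) 1) :
    z * fdivB 0 f z = f z - f 0 := by
  unfold fdivB
  rw [if_pos hz]
  split_ifs with h
  · simp [h]
  · rw [sub_zero]; field_simp

theorem aux_ex (E : Submodule ℂ (ℂ → ℂ))
    (hEhol : (E : Set (ℂ → ℂ)) ⊆ HolDisc)
    (TE : ↥E →ₗ[ℂ] ↥E) (hTE : ∀ f : ↥E, (↑(TE f) : ℂ → ℂ) = fdivB 0 ↑f)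
    (hbij : ∀ μ ∈ Metric.ball (0:ℂ) 1,
      Function.Bijective ((LinearMap.id : ↥E →ₗ[ℂ] ↥E) - μ • TE))
    {a : ℂ} (ha : a ∈ Metric.ball (0:ℂ) 1) (f : ↥E) (hf : (f : ℂ → ℂ) a = 0) :
    ∃ g : ↥E, ∀ z, (f : ℂ → ℂ) z = (z - a) * (g : ℂ → ℂ) z := by
  obtain ⟨g, hg⟩ := (hbij a ha).2 (TE f)
  refine ⟨g, fun z => ?_⟩
  by_cases hz : z ∈ Metric.ball (0:ℂ) 1
  swap
  · rw [(hEhol f.2).2 z hz, (hEhol g.2).2 z hz, mul_zero]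
  have key : ∀ w ∈ Metric.ball (0:ℂ) 1,
      w * (g : ℂ → ℂ) w - a * ((g : ℂ → ℂ) w - (g : ℂ → ℂ) 0)
        = (f : ℂ → ℂ) w - (f : ℂ → ℂ) 0 := by
    intro w hw
    have h1 := congrFun (congrArg (Subtype.val) hg) w
    simp [hTE] at h1
    rw [← aux_T _ hw, ← aux_T _ hw, ← h1]; ring
  have h1 := key a ha
  have h2 := key z hz
  rw [hf] at h1
  linear_combination h1 - h2

theorem aux_nv (E M : Submodule ℂ (ℂ → ℂ))
    (hEhol : (E : Set (ℂ → ℂ)) ⊆ HolDisc)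
    (TE : ↥E →ₗ[ℂ] ↥E) (hTE : ∀ f : ↥E, (↑(TE f) : ℂ → ℂ) = fdivB 0 ↑f)
    (hbij : ∀ μ ∈ Metric.ball (0:ℂ) 1,
      Function.Bijective ((LinearMap.id : ↥E →ₗ[ℂ] ↥E) - μ • TE))
    (hME : M ≤ E) (hM0 : M ≠ ⊥)
    {a : ℂ} (ha : a ∈ Metric.ball (0:ℂ) 1)
    (hdiv : ∀ f ∈ M, f a = 0 → fdivB a f ∈ M) : ∃ h ∈ M, h a ≠ 0 := by
  by_contra! hcon
  apply hM0
  rw [Submodule.eq_bot_iff]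
  intro f hf
  have hB : Metric.ball (0:ℂ) 1 ∈ 𝓝 a := Metric.isOpen_ball.mem_nhds ha
  have han : ∀ g ∈ M, AnalyticOnNhd ℂ g (Metric.ball (0:ℂ) 1) := fun g hg =>
    (hEhol (hME hg)).1.analyticOnNhd Metric.isOpen_ball
  have hit : ∀ n : ℕ, ∃ g ∈ M, ∀ z, f z = (z - a) ^ n * g z := by
    intro n
    induction n with
    | zero => exact ⟨f, hf, by simp⟩
    | succ n ih =>
      obtain ⟨g, hg, hfg⟩ := ih
      obtain ⟨k, hk⟩ := aux_ex E hEhol TE hTE hbij ha ⟨g, hME hg⟩ (hcon g hg)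
      have h1 := aux_fdiv ha (hEhol k.2) hk
      have h2 := hdiv g hg (hcon g hg)
      refine ⟨k, ?_, fun z => ?_⟩
      · rw [← h1]; exact h2
      · have := hk z
        simp only at this
        rw [hfg, this]; ring
  have htop : analyticOrderAt f a = ⊤ := by
    rw [ENat.eq_top_iff_forall_ge]
    intro n
    rw [natCast_le_analyticOrderAt (han f hf a ha)]
    obtain ⟨g, hg, h⟩ := hit n
    exact ⟨g, han g hg a ha, Eventually.of_forall (by simpa using h)⟩
  rw [analyticOrderAt_eq_top] at htop
  have hz := (han f hf).eqOn_zero_of_preconnected_of_eventuallyEq_zero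
    (convex_ball (0:ℂ) 1).isPreconnected ha htop
  funext z
  by_cases h : z ∈ Metric.ball (0:ℂ) 1
  · exact hz h
  · exact (hEhol (hME hf)).2 z h

theorem aux_surj (E M : Submodule ℂ (ℂ → ℂ))
    (hEhol : (E : Set (ℂ → ℂ)) ⊆ HolDisc)
    (hES : ∀ f ∈ E, shiftL f ∈ E)
    (TE : ↥E →ₗ[ℂ] ↥E) (hTE : ∀ f : ↥E, (↑(TE f) : ℂ → ℂ) = fdivB 0 ↑f)
    (hbij : ∀ μ ∈ Metric.ball (0:ℂ) 1,
      Function.Bijective ((LinearMap.id : ↥E →ₗ[ℂ] ↥E) - μ • TE))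
    (hME : M ≤ E) (hM0 : M ≠ ⊥)
    {a : ℂ} (ha : a ∈ Metric.ball (0:ℂ) 1)
    (hdiv : ∀ f ∈ M, f a = 0 → fdivB a f ∈ M) (x : ↥E ⧸ M.comap E.subtype) :
    ∃ g : ↥E, (M.comap E.subtype).mkQ (shiftL.restrict hES g - a • g) = x := by
  obtain ⟨h, hM, hne⟩ := aux_nv E M hEhol TE hTE hbij hME hM0 ha hdiv
  obtain ⟨f, rfl⟩ := (M.comap E.subtype).mkQ_surjective x
  obtain ⟨g, hg⟩ := aux_ex E hEhol TE hTE hbij ha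
    (f - ((f : ℂ → ℂ) a / h a) • (⟨h, hME hM⟩ : ↥E)) (by simp [hne])
  refine ⟨g, ?_⟩
  have e : shiftL.restrict hES g - a • g = f - ((f : ℂ → ℂ) a / h a) • (⟨h, hME hM⟩ : ↥E) := by
    ext z
    rw [hg z]
    simp [shiftL]; ring
  have hz : (M.comap E.subtype).mkQ (⟨h, hME hM⟩ : ↥E) = 0 := by
    simpa using hM
  rw [e, map_sub, map_smul, hz, smul_zero, sub_zero]

/-- (Proposition 2.5 (iv)) -/
theorem statement4
    (E M : Submodule ℂ (ℂ → ℂ))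
    (hEhol : (E : Set (ℂ → ℂ)) ⊆ HolDisc) (hE0 : E ≠ ⊥)
    (hES : ∀ f ∈ E, shiftL f ∈ E)
    (TE : ↥E →ₗ[ℂ] ↥E) (hTE : ∀ f : ↥E, (↑(TE f) : ℂ → ℂ) = fdivB 0 ↑f)
    (hbij : ∀ μ ∈ Metric.ball (0:ℂ) 1,
      Function.Bijective ((LinearMap.id : ↥E →ₗ[ℂ] ↥E) - μ • TE))
    (hME : M ≤ E) (hM0 : M ≠ ⊥) (hMne : M ≠ E)
    (lam : ℂ) (hlam : lam ∈ Metric.ball (0:ℂ) 1)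
    -- M has the division property at λ, with U_λ = U onto satisfying U ∘ π ∘ (S|E - λ) = π
    (hdiv : ∀ f ∈ M, f lam = 0 → fdivB lam f ∈ M)
    (U : (↥E ⧸ M.comap E.subtype) →ₗ[ℂ] (↥E ⧸ M.comap E.subtype))
    (hU : ∀ f : ↥E,
      U ((M.comap E.subtype).mkQ (shiftL.restrict hES f - lam • f)) =
        (M.comap E.subtype).mkQ f)
    (hUonto : Function.Surjective U)
    (mu : ℂ) (hmu : mu ∈ Metric.ball (0:ℂ) 1) :
    -- M has the division property at μ iff I - (μ-λ)U is one-to-one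
    ((∀ f ∈ M, f mu = 0 → fdivB mu f ∈ M) ↔
      Function.Injective
        ⇑((LinearMap.id : (↥E ⧸ M.comap E.subtype) →ₗ[ℂ] (↥E ⧸ M.comap E.subtype))
            - (mu - lam) • U))
    -- and in this case I - (μ-λ)U is a bijection and U_μ = U_λ ∘ (I - (μ-λ)U_λ)⁻¹
    ∧ ((∀ f ∈ M, f mu = 0 → fdivB mu f ∈ M) →
        Function.Bijective
          ⇑((LinearMap.id : (↥E ⧸ M.comap E.subtype) →ₗ[ℂ] (↥E ⧸ M.comap E.subtype))
              - (mu - lam) • U)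
        ∧ ∃ Umu : (↥E ⧸ M.comap E.subtype) →ₗ[ℂ] (↥E ⧸ M.comap E.subtype),
            (∀ f : ↥E,
              Umu ((M.comap E.subtype).mkQ (shiftL.restrict hES f - mu • f)) =
                (M.comap E.subtype).mkQ f)
            ∧ Umu ∘ₗ ((LinearMap.id : (↥E ⧸ M.comap E.subtype) →ₗ[ℂ]
                (↥E ⧸ M.comap E.subtype)) - (mu - lam) • U) = U) := by
  have hV : ∀ f : ↥E, ((LinearMap.id : (↥E ⧸ M.comap E.subtype) →ₗ[ℂ] (↥E ⧸ M.comap E.subtype)) - (mu - lam) • U)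
      ((M.comap E.subtype).mkQ (shiftL.restrict hES f - lam • f)) = (M.comap E.subtype).mkQ (shiftL.restrict hES f - mu • f) := by
    intro f
    rw [LinearMap.sub_apply, LinearMap.smul_apply, hU, LinearMap.id_apply, ← map_smul, ← map_sub]
    congr 1
    module
  generalize hVd : ((LinearMap.id : (↥E ⧸ M.comap E.subtype) →ₗ[ℂ] (↥E ⧸ M.comap E.subtype)) - (mu - lam) • U) = V at hV ⊢
  have hmem : ∀ f : ↥E, (M.comap E.subtype).mkQ f = 0 ↔ (f : ℂ → ℂ) ∈ M := by
    intro f; simp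
  have hinj : (∀ f ∈ M, f mu = 0 → fdivB mu f ∈ M) → Function.Injective V := by
    intro hd
    rw [injective_iff_map_eq_zero]
    intro x hx
    obtain ⟨g, rfl⟩ := aux_surj E M hEhol hES TE hTE hbij hME hM0 hlam hdiv x
    have h1 := hx
    rw [hV, hmem] at h1
    have hval : ∀ z, ((shiftL.restrict hES g - mu • g : ↥E) : ℂ → ℂ) z
        = (z - mu) * (g : ℂ → ℂ) z := by
      intro z; simp [shiftL]; ring
    have h2 := hd _ h1 (by rw [hval]; simp)
    rw [aux_fdiv hmu (hEhol g.2) hval, ← hmem] at h2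
    rw [← hVd, LinearMap.sub_apply, LinearMap.smul_apply, hU, h2, smul_zero, sub_zero] at hx
    exact hx
  refine ⟨⟨hinj, ?_⟩, ?_⟩
  · intro hi f hf h0
    obtain ⟨g, hg⟩ := aux_ex E hEhol TE hTE hbij hmu ⟨f, hME hf⟩ h0
    have e : shiftL.restrict hES g - mu • g = ⟨f, hME hf⟩ := by
      ext z; rw [hg z]; simp [shiftL]; ring
    have h1 := hV g
    rw [e, (hmem ⟨f, hME hf⟩).2 hf] at h1
    have h2 := (injective_iff_map_eq_zero V).1 hi _ h1
    have h3 := hU g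
    rw [h2, map_zero] at h3
    have h4 := aux_fdiv hmu (hEhol g.2) hg
    simp only at h4
    rw [h4]
    exact (hmem g).1 h3.symm
  · intro hd
    have hb : Function.Bijective V := by
      refine ⟨hinj hd, fun x => ?_⟩
      obtain ⟨g, rfl⟩ := aux_surj E M hEhol hES TE hTE hbij hME hM0 hmu hd x
      exact ⟨_, hV g⟩
    refine ⟨hb, U ∘ₗ (LinearEquiv.ofBijective V hb).symm.toLinearMap, ?_, ?_⟩
    · intro f
      rw [← hV f]
      have : (LinearEquiv.ofBijective V hb).symm (V ((M.comap E.subtype).mkQ (shiftL.restrict hES f - lam • f)))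
          = (M.comap E.subtype).mkQ (shiftL.restrict hES f - lam • f) :=
        (LinearEquiv.ofBijective V hb).symm_apply_apply _
      rw [LinearMap.comp_apply, LinearEquiv.coe_coe, this, hU]
    · apply LinearMap.ext; intro x
      rw [LinearMap.comp_apply, LinearMap.comp_apply]
      exact congrArg U ((LinearEquiv.ofBijective V hb).symm_apply_apply x)
end
end

section
/- Let E ≠ {0} be a z-invariant linear subspace of Hol(𝔻) with T(E) ⊂ E such that I_E − λT|_E : E → E is bijective for every λ ∈ 𝔻, let M be a nontrivial linear subspace of E having the division property, and let π : E → E/M be the canonical surjection. Then for every λ ∈ 𝔻 there exists an onto linear map U_λ : E/M → E/M such that U_λ ∘ π ∘ (S|_E − λI_E) = π, the map I_{E/M} − (μ − λ)U_λ : E/M → E/M is a bijection for every μ ∈ 𝔻, and U_μ = U_λ ∘ (I_{E/M} − (μ − λ)U_λ)^{-1}. -/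
noncomputable section

open Metric Set Filter Topology
open scoped Classical

theorem hol_of_mem {E : Submodule ℂ (ℂ → ℂ)} (hEhol : (E : Set (ℂ → ℂ)) ⊆ HolDisc)
    {f : ℂ → ℂ} (hf : f ∈ E) : f ∈ HolDisc := hEhol hf

theorem fdivB_mul_cancel {f : ℂ → ℂ} (hf : f ∈ HolDisc) {lam : ℂ}
    (hl : lam ∈ Metric.ball (0:ℂ) 1) : fdivB lam (fun z => z * f z - lam * f z) = f := by
  funext z
  unfold fdivB
  by_cases hz : z ∈ Metric.ball (0:ℂ) 1
  · rw [if_pos hz]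
    by_cases h : z = lam
    · rw [if_pos h]
      subst h
      have hd : HasDerivAt f (deriv f z) z :=
        (hf.1.differentiableAt (Metric.isOpen_ball.mem_nhds hl)).hasDerivAt
      have := ((hasDerivAt_id z).mul hd).sub (hd.const_mul z)
      have h2 := this.deriv
      simp only [id, one_mul, add_sub_cancel_right] at h2
      exact h2
    · rw [if_neg h]
      have : z - lam ≠ 0 := sub_ne_zero.mpr h
      field_simp
      ring
  · rw [if_neg hz, hf.2 z hz]

theorem mul_fdivB {f : ℂ → ℂ} (hf : f ∈ HolDisc) {lam : ℂ} (h0 : f lam = 0) (z : ℂ) :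
    z * fdivB lam f z - lam * fdivB lam f z = f z := by
  unfold fdivB
  by_cases hz : z ∈ Metric.ball (0:ℂ) 1
  · rw [if_pos hz]
    by_cases h : z = lam
    · rw [if_pos h]; subst h; rw [h0]; ring
    · rw [if_neg h, h0]
      have : z - lam ≠ 0 := sub_ne_zero.mpr h
      field_simp
      ring
  · rw [if_neg hz, hf.2 z hz]; ring

theorem analyticAt_of_hol {f : ℂ → ℂ} (hf : f ∈ HolDisc) {lam : ℂ}
    (hl : lam ∈ Metric.ball (0:ℂ) 1) : AnalyticAt ℂ f lam :=
  hf.1.analyticAt (Metric.isOpen_ball.mem_nhds hl)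

theorem exists_nonvanishing {M : Submodule ℂ (ℂ → ℂ)}
    (hM : (M : Set (ℂ → ℂ)) ⊆ HolDisc) (hM0 : M ≠ ⊥) {lam : ℂ}
    (hl : lam ∈ Metric.ball (0:ℂ) 1)
    (hdiv : ∀ f ∈ M, f lam = 0 → fdivB lam f ∈ M) : ∃ h ∈ M, h lam ≠ 0 := by
  by_contra! hcon
  apply hM0
  rw [Submodule.eq_bot_iff]
  intro f hf
  have key : ∀ n : ℕ, ∃ g ∈ M, ∀ z, f z = (z - lam) ^ n * g z := by
    intro n
    induction n with
    | zero => exact ⟨f, hf, fun z => by simp⟩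
    | succ n ih =>
      obtain ⟨g, hg, h⟩ := ih
      refine ⟨fdivB lam g, hdiv g hg (hcon g hg), fun z => ?_⟩
      rw [h z, ← mul_fdivB (hM hg) (hcon g hg) z]
      ring
  have hfa := analyticAt_of_hol (hM hf) hl
  have htop : analyticOrderAt f lam = ⊤ := by
    rw [ENat.eq_top_iff_forall_ge]
    intro n
    rw [natCast_le_analyticOrderAt hfa]
    obtain ⟨g, hg, h⟩ := key n
    exact ⟨g, analyticAt_of_hol (hM hg) hl, Filter.Eventually.of_forall fun z => by
      simpa using h z⟩
  rw [analyticOrderAt_eq_top] at htop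
  have han : AnalyticOnNhd ℂ f (Metric.ball (0:ℂ) 1) := fun z hz => analyticAt_of_hol (hM hf) hz
  have hz := han.eqOn_zero_of_preconnected_of_eventuallyEq_zero
    (convex_ball (0:ℂ) 1).isPreconnected hl htop
  funext z
  by_cases h : z ∈ Metric.ball (0:ℂ) 1
  · exact hz h
  · exact (hM hf).2 z h

theorem exists_factor {V W X : Type*} [AddCommGroup V] [AddCommGroup W] [AddCommGroup X]
    [Module ℂ V] [Module ℂ W] [Module ℂ X] (P : V →ₗ[ℂ] W) (p : V →ₗ[ℂ] X)
    (hP : Function.Surjective P) (hk : ∀ v, P v = 0 → p v = 0) :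
    ∃ U : W →ₗ[ℂ] X, ∀ v, U (P v) = p v := by
  obtain ⟨R, hR⟩ := P.exists_rightInverse_of_surjective (LinearMap.range_eq_top.mpr hP)
  refine ⟨p ∘ₗ R, fun v => ?_⟩
  have h1 : P (R (P v)) = P v := LinearMap.congr_fun hR (P v)
  have := hk (R (P v) - v) (by rw [map_sub, h1, sub_self])
  rw [map_sub, sub_eq_zero] at this
  exact this

/-- (Corollary 2.6) -/
theorem statement5
    (E M : Submodule ℂ (ℂ → ℂ))
    (hEhol : (E : Set (ℂ → ℂ)) ⊆ HolDisc) (hE0 : E ≠ ⊥)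
    (hES : ∀ f ∈ E, shiftL f ∈ E)
    (TE : ↥E →ₗ[ℂ] ↥E) (hTE : ∀ f : ↥E, (↑(TE f) : ℂ → ℂ) = fdivB 0 ↑f)
    (hbij : ∀ μ ∈ Metric.ball (0:ℂ) 1,
      Function.Bijective ((LinearMap.id : ↥E →ₗ[ℂ] ↥E) - μ • TE))
    (hME : M ≤ E) (hM0 : M ≠ ⊥) (hMne : M ≠ E)
    -- M has the division property
    (hdiv : ∀ lam ∈ Metric.ball (0:ℂ) 1, ∀ f ∈ M, f lam = 0 → fdivB lam f ∈ M) :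
    ∀ lam ∈ Metric.ball (0:ℂ) 1,
      ∃ U : (↥E ⧸ M.comap E.subtype) →ₗ[ℂ] (↥E ⧸ M.comap E.subtype),
        Function.Surjective U
        ∧ (∀ f : ↥E,
            U ((M.comap E.subtype).mkQ (shiftL.restrict hES f - lam • f)) =
              (M.comap E.subtype).mkQ f)
        ∧ ∀ mu ∈ Metric.ball (0:ℂ) 1,
            Function.Bijective
              ⇑((LinearMap.id : (↥E ⧸ M.comap E.subtype) →ₗ[ℂ] (↥E ⧸ M.comap E.subtype))
                  - (mu - lam) • U)
            ∧ ∃ Umu : (↥E ⧸ M.comap E.subtype) →ₗ[ℂ] (↥E ⧸ M.comap E.subtype),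
                (∀ f : ↥E,
                  Umu ((M.comap E.subtype).mkQ (shiftL.restrict hES f - mu • f)) =
                    (M.comap E.subtype).mkQ f)
                ∧ Umu ∘ₗ ((LinearMap.id : (↥E ⧸ M.comap E.subtype) →ₗ[ℂ]
                    (↥E ⧸ M.comap E.subtype)) - (mu - lam) • U) = U := by
  set Q := M.comap E.subtype with hQ
  -- the map `π ∘ (S - λ)`
  let P : ℂ → (↥E →ₗ[ℂ] (↥E ⧸ Q)) := fun l =>
    Q.mkQ ∘ₗ (shiftL.restrict hES - l • LinearMap.id)
  have hPapp : ∀ l (f : ↥E), P l f = Q.mkQ (shiftL.restrict hES f - l • f) := fun l f => rfl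
  have hcoe : ∀ l (f : ↥E), ((shiftL.restrict hES f - l • f : ↥E) : ℂ → ℂ) =
      fun z => z * (f : ℂ → ℂ) z - l * (f : ℂ → ℂ) z := fun l f => rfl
  have hdivE : ∀ l ∈ Metric.ball (0:ℂ) 1, ∀ f : ↥E, (f : ℂ → ℂ) l = 0 →
      ∃ k : ↥E, shiftL.restrict hES k - l • k = f := by
    intro l hl f hf0
    obtain ⟨g, hg⟩ := (hbij l hl).2 f
    have hgz : ∀ z, (g : ℂ → ℂ) z - l * fdivB 0 g z = (f : ℂ → ℂ) z := by
      intro z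
      rw [← hTE, ← hg]
      rfl
    have hg0 : (g : ℂ → ℂ) 0 = 0 := by
      have h := hgz l
      by_cases h0 : l = 0
      · subst h0
        rw [hf0] at h
        simpa using h
      · rw [hf0, fdivB, if_pos hl, if_neg h0, sub_zero] at h
        field_simp at h
        simpa using h
    refine ⟨TE g, Subtype.ext ?_⟩
    rw [hcoe]
    funext z
    have h1 := mul_fdivB (hEhol g.2) hg0 z
    rw [← hgz z, hTE]
    linear_combination h1
  have hsurj : ∀ l ∈ Metric.ball (0:ℂ) 1, Function.Surjective (P l) := by
    intro l hl q
    obtain ⟨f, rfl⟩ := Q.mkQ_surjective q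
    obtain ⟨h, hhM, hhl⟩ := exists_nonvanishing (fun f hf => hEhol (hME hf)) hM0 hl (hdiv l hl)
    let h' : ↥E := ⟨h, hME hhM⟩
    obtain ⟨k, hk⟩ := hdivE l hl (f - ((f : ℂ → ℂ) l / h l) • h') (by
      change (f : ℂ → ℂ) l - ((f : ℂ → ℂ) l / h l) * h l = 0
      field_simp
      ring)
    refine ⟨k, ?_⟩
    rw [hPapp, hk, map_sub, map_smul]
    have : Q.mkQ h' = 0 := by
      rw [Submodule.mkQ_apply, Submodule.Quotient.mk_eq_zero]
      exact hhM
    rw [this, smul_zero, sub_zero]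
  have hker : ∀ l ∈ Metric.ball (0:ℂ) 1, ∀ f : ↥E, P l f = 0 → Q.mkQ f = 0 := by
    intro l hl f hf
    rw [hPapp, Submodule.mkQ_apply, Submodule.Quotient.mk_eq_zero] at hf
    rw [Submodule.mkQ_apply, Submodule.Quotient.mk_eq_zero]
    have hm : (fun z => z * (f : ℂ → ℂ) z - l * (f : ℂ → ℂ) z) ∈ M := hf
    have := hdiv l hl _ hm (by simp)
    rw [fdivB_mul_cancel (hEhol f.2) hl] at this
    exact this
  have hU : ∀ l ∈ Metric.ball (0:ℂ) 1, ∃ U : (↥E ⧸ Q) →ₗ[ℂ] (↥E ⧸ Q),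
      ∀ f, U (P l f) = Q.mkQ f := fun l hl => exists_factor _ _ (hsurj l hl) (hker l hl)
  intro lam hlam
  obtain ⟨U, hUP⟩ := hU lam hlam
  refine ⟨U, ?_, hUP, ?_⟩
  · intro q
    obtain ⟨f, rfl⟩ := Q.mkQ_surjective q
    exact ⟨_, hUP f⟩
  intro mu hmu
  obtain ⟨V, hVP⟩ := hU mu hmu
  have hstep : ∀ f, (LinearMap.id - (mu - lam) • U : (↥E ⧸ Q) →ₗ[ℂ] (↥E ⧸ Q)) (P lam f)
      = P mu f := by
    intro f
    rw [LinearMap.sub_apply, LinearMap.smul_apply, hUP, LinearMap.id_apply, hPapp, hPapp,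
      ← map_smul, ← map_sub]
    congr 1
    module
  have hcomp : ∀ q, V ((LinearMap.id - (mu - lam) • U : (↥E ⧸ Q) →ₗ[ℂ] (↥E ⧸ Q)) q) = U q := by
    intro q
    obtain ⟨f, rfl⟩ := hsurj lam hlam q
    rw [hstep, hVP, hUP]
  refine ⟨⟨?_, ?_⟩, V, hVP, LinearMap.ext hcomp⟩
  · rw [injective_iff_map_eq_zero]
    intro q hq
    have h1 := hcomp q
    rw [hq, map_zero] at h1
    rw [LinearMap.sub_apply, LinearMap.smul_apply, ← h1] at hq
    simpa using hq
  · intro q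
    obtain ⟨f, rfl⟩ := hsurj mu hmu q
    exact ⟨_, hstep f⟩
end
end

section
/- Let E ∈ 𝓔. Then: for every f ∈ E and λ ∈ 𝔻 the function f_λ belongs to E and the map f ↦ f_λ is a bounded operator on E; Z(E) = ∅; the inclusion map E → Hol(𝔻) is continuous (equivalently, every evaluation functional δ_λ : f ↦ f(λ), λ ∈ 𝔻, is continuous on E); 𝓗(𝔻̄) ⊂ E; and Spec(S|_E) = Spec(T|_E) = 𝔻̄, the closed unit disc. -/
noncomputable section

open Metric Set Filter Topology
open scoped Classical

theorem aux_unit {X : Type*} [NormedAddCommGroup X] [NormedSpace ℂ X] [CompleteSpace X]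
    (A : X →L[ℂ] X) (hA : spectralRadius ℂ A ≤ 1) (lam : ℂ) (h : lam ∈ Metric.ball (0:ℂ) 1) :
    IsUnit (1 - lam • A) := by
  apply spectrum.isUnit_one_sub_smul_of_lt_inv_radius
  have h1 : (1 : ENNReal) ≤ (spectralRadius ℂ A)⁻¹ := ENNReal.one_le_inv.2 hA
  refine lt_of_lt_of_le ?_ h1
  have : ‖lam‖ < 1 := by simpa using h
  exact_mod_cast this

theorem aux_unit' {X : Type*} [NormedAddCommGroup X] [NormedSpace ℂ X] [CompleteSpace X]
    (A : X →L[ℂ] X) (hA : spectralRadius ℂ A ≤ 1) (lam : ℂ) (h : lam ∈ Metric.ball (0:ℂ) 1) :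
    ∃ B : X →L[ℂ] X, ∀ x, B x - lam • A (B x) = x := by
  obtain ⟨u, hu⟩ := aux_unit A hA lam h
  refine ⟨(u⁻¹ : (X →L[ℂ] X)ˣ), fun x => ?_⟩
  have : (u : X →L[ℂ] X) * (u⁻¹ : (X →L[ℂ] X)ˣ) = 1 := u.mul_inv
  have h2 := congrArg (fun L : X →L[ℂ] X => L x) this
  simpa [hu] using h2

theorem aux_spec {X : Type*} [NormedAddCommGroup X] [NormedSpace ℂ X] [CompleteSpace X]
    (A : X →L[ℂ] X) (hA : spectralRadius ℂ A ≤ 1)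
    (h : ∀ lam ∈ Metric.ball (0:ℂ) 1, lam ∈ spectrum ℂ A) :
    spectrum ℂ A = Metric.closedBall (0:ℂ) 1 := by
  apply Subset.antisymm
  · intro k hk
    have : (‖k‖₊ : ENNReal) ≤ 1 :=
      le_trans (le_iSup₂ (f := fun (k : ℂ) (_ : k ∈ spectrum ℂ A) => (‖k‖₊ : ENNReal)) k hk) hA
    have : ‖k‖ ≤ 1 := by exact_mod_cast this
    simpa using this
  · rw [← closure_ball (0:ℂ) one_ne_zero]
    exact closure_minimal h (spectrum.isClosed A)

theorem aux_pow {X : Type*} [NormedAddCommGroup X] [NormedSpace ℂ X] [CompleteSpace X]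
    (A : X →L[ℂ] X) (hA : spectralRadius ℂ A ≤ 1) (s : NNReal) (hs : 1 < s) :
    ∀ᶠ n : ℕ in atTop, ‖A ^ n‖ ≤ (s : ℝ) ^ n := by
  have ht := spectrum.pow_nnnorm_pow_one_div_tendsto_nhds_spectralRadius A
  have h1 : spectralRadius ℂ A < (s : ENNReal) := lt_of_le_of_lt hA (by exact_mod_cast hs)
  filter_upwards [ht.eventually (gt_mem_nhds h1), eventually_gt_atTop 0] with n hn hn0
  have h2 : ((‖A ^ n‖₊ : ENNReal) ^ (1 / n : ℝ)) ^ (n : ℝ) ≤ (s : ENNReal) ^ (n : ℝ) :=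
    ENNReal.rpow_le_rpow hn.le (by positivity)
  rw [← ENNReal.rpow_mul, one_div_mul_cancel (by positivity), ENNReal.rpow_one,
    ENNReal.rpow_natCast] at h2
  exact_mod_cast h2

/-- (Proposition 3.2) For `E ∈ 𝓔` (encoded as a Banach space `X` with an
injective linear inclusion `ι` into `Hol(𝔻)`, invariant under the shift `S` and backward
shift `T`, both bounded with spectral radius `≤ 1`): division by `z - λ` is a bounded
operator, `Z(E) = ∅`, evaluations are continuous, `𝓗(𝔻̄) ⊆ E`, and
`Spec(S|E) = Spec(T|E) = 𝔻̄`. -/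
theorem statement6
    {X : Type*} [NormedAddCommGroup X] [NormedSpace ℂ X] [CompleteSpace X] [Nontrivial X]
    (ι : X →ₗ[ℂ] (ℂ → ℂ)) (hinj : Function.Injective ι)
    (hhol : ∀ f : X, ι f ∈ HolDisc)
    (Sb Tb : X →L[ℂ] X)
    (hSb : ∀ f : X, ι (Sb f) = shiftL (ι f))
    (hTb : ∀ f : X, ι (Tb f) = fdivB 0 (ι f))
    (hSrad : spectralRadius ℂ Sb ≤ 1) (hTrad : spectralRadius ℂ Tb ≤ 1) :
    -- f ↦ f_λ maps E to E and is a bounded operator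
    (∀ lam ∈ Metric.ball (0:ℂ) 1, ∃ D : X →L[ℂ] X, ∀ f : X, ι (D f) = fdivB lam (ι f))
    -- Z(E) = ∅
    ∧ (∀ lam ∈ Metric.ball (0:ℂ) 1, ∃ f : X, ι f lam ≠ 0)
    -- evaluation functionals are continuous (the injection E → Hol(𝔻) is continuous)
    ∧ (∀ lam ∈ Metric.ball (0:ℂ) 1, ∃ φ : X →L[ℂ] ℂ, ∀ f : X, φ f = ι f lam)
    -- 𝓗(𝔻̄) ⊆ E
    ∧ (∀ g : ℂ → ℂ, (∃ r : ℝ, 1 < r ∧ DifferentiableOn ℂ g (Metric.ball (0:ℂ) r)) →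
        ∃ f : X, Set.EqOn (ι f) g (Metric.ball (0:ℂ) 1))
    -- Spec(S|E) = Spec(T|E) = 𝔻̄
    ∧ spectrum ℂ Sb = Metric.closedBall (0:ℂ) 1
    ∧ spectrum ℂ Tb = Metric.closedBall (0:ℂ) 1 := by
  have hT0 : ∀ f : X, ∀ z ∈ Metric.ball (0:ℂ) 1, z * ι (Tb f) z = ι f z - ι f 0 := by
    intro f z hz
    rw [hTb]
    by_cases h0 : z = 0
    · simp [h0]
    · simp only [fdivB, if_pos hz, if_neg h0, sub_zero]
      field_simp
  have hS0 : ∀ f : X, ∀ z, ι (Sb f) z = z * ι f z := by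
    intro f z; rw [hSb]; rfl
  have hext : ∀ f g : X, (∀ z ∈ Metric.ball (0:ℂ) 1, ι f z = ι g z) → f = g := by
    intro f g h
    apply hinj
    funext z
    by_cases hz : z ∈ Metric.ball (0:ℂ) 1
    · exact h z hz
    · rw [(hhol f).2 z hz, (hhol g).2 z hz]
  have hcont : ∀ f : X, ContinuousOn (ι f) (Metric.ball (0:ℂ) 1) :=
    fun f => (hhol f).1.continuousOn
  have hzero : (0:ℂ) ∈ Metric.ball (0:ℂ) 1 := by simp
  -- two functions agreeing off a point
  have hpt : ∀ lam ∈ Metric.ball (0:ℂ) 1, ∀ f g : ℂ → ℂ, ContinuousAt f lam → ContinuousAt g lam →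
      (∀ z ∈ Metric.ball (0:ℂ) 1, z ≠ lam → f z = g z) → f lam = g lam := by
    intro lam hl f g hf hg h
    have h1 : Tendsto f (𝓝[≠] lam) (𝓝 (f lam)) := hf.tendsto.mono_left nhdsWithin_le_nhds
    have h2 : Tendsto g (𝓝[≠] lam) (𝓝 (g lam)) := hg.tendsto.mono_left nhdsWithin_le_nhds
    refine tendsto_nhds_unique h1 (h2.congr' ?_)
    filter_upwards [self_mem_nhdsWithin,
      mem_nhdsWithin_of_mem_nhds (isOpen_ball.mem_nhds hl)] with z hz hz2
    exact (h z hz2 hz).symm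
  have hTS : ∀ f : X, Tb (Sb f) = f := by
    intro f
    apply hext
    have key : ∀ z ∈ Metric.ball (0:ℂ) 1, z ≠ 0 → ι (Tb (Sb f)) z = ι f z := by
      intro z hz hz0
      have := hT0 (Sb f) z hz
      rw [hS0, hS0, zero_mul, sub_zero] at this
      exact mul_left_cancel₀ hz0 this
    intro z hz
    by_cases hz0 : z = 0
    · rw [hz0]
      exact hpt 0 hzero _ _ ((hcont _).continuousAt (isOpen_ball.mem_nhds hzero))
        ((hcont _).continuousAt (isOpen_ball.mem_nhds hzero)) key
    · exact key z hz hz0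
  have hD : ∀ lam ∈ Metric.ball (0:ℂ) 1, ∃ D : X →L[ℂ] X, ∀ f : X,
      (∀ z ∈ Metric.ball (0:ℂ) 1, (z - lam) * ι (D f) z = ι f z - ι f 0 - lam * ι (D f) 0) ∧
      ι f lam = ι f 0 + lam * ι (D f) 0 := by
    intro lam hl
    obtain ⟨B, hB⟩ := aux_unit' Tb hTrad lam hl
    refine ⟨B.comp Tb, fun f => ?_⟩
    have key : ∀ z ∈ Metric.ball (0:ℂ) 1,
        (z - lam) * ι (B (Tb f)) z = ι f z - ι f 0 - lam * ι (B (Tb f)) 0 := by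
      intro z hz
      have h1 := congrArg (fun x => ι x z) (hB (Tb f))
      simp only [map_sub, map_smul, Pi.sub_apply, Pi.smul_apply, smul_eq_mul] at h1
      have h2 := hT0 f z hz
      have h3 := hT0 (B (Tb f)) z hz
      linear_combination z * h1 + h2 + lam * h3
    refine ⟨key, ?_⟩
    have h4 := key lam hl
    simp only [ContinuousLinearMap.comp_apply]
    linear_combination (-1 : ℂ) * h4
  have hex : ∃ f : X, ι f 0 ≠ 0 := by
    by_contra! hcon
    obtain ⟨f, hf⟩ := exists_ne (0 : X)
    apply hf
    apply hext
    intro z hz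
    obtain ⟨D, hDf⟩ := hD z hz
    rw [(hDf f).2, hcon, hcon]; simp
  obtain ⟨u, hu⟩ : ∃ u : X, ∀ z ∈ Metric.ball (0:ℂ) 1, ι u z = 1 := by
    obtain ⟨f, hf⟩ := hex
    refine ⟨(ι f 0)⁻¹ • (f - Sb (Tb f)), fun z hz => ?_⟩
    simp only [map_sub, map_smul, Pi.sub_apply, Pi.smul_apply, smul_eq_mul, hS0, hT0 f z hz]
    field_simp
    ring
  have hu0 : u ≠ 0 := by
    intro h
    have := hu 0 hzero
    simp [h] at this
  have hsub : ∀ f : X, f - Sb (Tb f) = ι f 0 • u := by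
    intro f
    apply hext
    intro z hz
    simp only [map_sub, map_smul, Pi.sub_apply, Pi.smul_apply, smul_eq_mul, hS0, hT0 f z hz,
      hu z hz]
    ring
  obtain ⟨φ0, hφ0⟩ : ∃ φ : X →L[ℂ] ℂ, ∀ f : X, φ f = ι f 0 := by
    refine ⟨LinearMap.mkContinuous ((LinearMap.proj (0:ℂ)).comp ι)
      (‖ContinuousLinearMap.id ℂ X - Sb.comp Tb‖ / ‖u‖) ?_, fun f => rfl⟩
    intro f
    have h1 := (ContinuousLinearMap.id ℂ X - Sb.comp Tb).le_opNorm f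
    have h2 : (ContinuousLinearMap.id ℂ X - Sb.comp Tb) f = ι f 0 • u := by
      rw [← hsub]; rfl
    rw [h2, norm_smul] at h1
    have hup : 0 < ‖u‖ := norm_pos_iff.2 hu0
    rw [div_mul_eq_mul_div, le_div_iff₀ hup]
    exact h1
  have hev : ∀ lam ∈ Metric.ball (0:ℂ) 1, ∃ φ : X →L[ℂ] ℂ, ∀ f : X, φ f = ι f lam := by
    intro lam hl
    obtain ⟨D, hDf⟩ := hD lam hl
    refine ⟨φ0 + lam • φ0.comp D, fun f => ?_⟩
    rw [(hDf f).2]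
    simp [hφ0]
  have hSpow : ∀ (n : ℕ), ∀ z ∈ Metric.ball (0:ℂ) 1, ι ((Sb ^ n) u) z = z ^ n := by
    intro n z hz
    induction n with
    | zero => simpa using hu z hz
    | succ n ih =>
      rw [pow_succ', ContinuousLinearMap.mul_apply, hS0, ih, pow_succ']
  refine ⟨?_, ?_, hev, ?_, ?_, ?_⟩
  · intro lam hl
    obtain ⟨D, hDf⟩ := hD lam hl
    refine ⟨D, fun f => ?_⟩
    have key : ∀ z ∈ Metric.ball (0:ℂ) 1, z ≠ lam →
        ι (D f) z = (ι f z - ι f lam) / (z - lam) := by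
      intro z hz hzl
      have : z - lam ≠ 0 := sub_ne_zero.2 hzl
      rw [eq_div_iff this]
      linear_combination (hDf f).1 z hz + (hDf f).2
    funext z
    by_cases hz : z ∈ Metric.ball (0:ℂ) 1
    · simp only [fdivB, if_pos hz]
      by_cases hzl : z = lam
      · rw [if_pos hzl, hzl]
        have hdiff : DifferentiableAt ℂ (ι f) lam :=
          (hhol f).1.differentiableAt (isOpen_ball.mem_nhds hl)
        have h1 := hpt lam hl (ι (D f)) (dslope (ι f) lam)
          ((hcont _).continuousAt (isOpen_ball.mem_nhds hl)) (continuousAt_dslope_same.2 hdiff) ?_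
        · rw [h1, dslope_same]
        · intro w hw hwl
          rw [key w hw hwl, dslope_of_ne _ hwl, slope_def_field]
      · rw [if_neg hzl]
        exact key z hz hzl
    · rw [(hhol _).2 z hz]; simp only [fdivB, if_neg hz]
  · intro lam hl
    exact ⟨u, by rw [hu lam hl]; exact one_ne_zero⟩
  · rintro g ⟨r, hr, hg⟩
    obtain ⟨t, ht1, htr⟩ := exists_between hr
    obtain ⟨s, hs1, hst⟩ := exists_between ht1
    lift t to NNReal using by linarith
    lift s to NNReal using by linarith
    have hp := (hg.mono (closedBall_subset_ball htr)).hasFPowerSeriesOnBall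
      (by exact_mod_cast (by linarith : (0:ℝ) < t))
    set p := cauchyPowerSeries g 0 t with hpdef
    have hsum1 : Summable fun n => ‖p n‖ * (s : ℝ) ^ n := by
      apply p.summable_norm_mul_pow
      refine lt_of_lt_of_le ?_ hp.r_le
      exact_mod_cast hst
    have hsum : Summable fun n => p.coeff n • (Sb ^ n) u := by
      apply Summable.of_norm_bounded_eventually_nat (hsum1.mul_right ‖u‖)
      filter_upwards [aux_pow Sb hSrad s (by exact_mod_cast hs1)] with n hn
      rw [norm_smul, mul_assoc, FormalMultilinearSeries.norm_apply_eq_norm_coef]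
      gcongr
      exact ((Sb ^ n).le_opNorm u).trans (by gcongr)
    refine ⟨∑' n, p.coeff n • (Sb ^ n) u, fun z hz => ?_⟩
    obtain ⟨φ, hφ⟩ := hev z hz
    have h1 := (hsum.hasSum.mapL φ)
    rw [hφ] at h1
    have h2 := hp.hasSum (y := z) (by
      rw [Metric.mem_eball, edist_zero_right, enorm_eq_nnnorm]
      have : ‖z‖ < 1 := by simpa using hz
      exact_mod_cast (this.trans ht1))
    rw [zero_add] at h2
    have h3 : (fun n => φ (p.coeff n • (Sb ^ n) u)) = fun n => p n fun _ => z := by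
      funext n
      rw [map_smul, hφ, hSpow n z hz, FormalMultilinearSeries.apply_eq_pow_smul_coeff,
        smul_eq_mul, smul_eq_mul, mul_comm]
    rw [h3] at h1
    exact h1.unique h2
  · apply aux_spec Sb hSrad
    intro lam hl hmem
    obtain ⟨v, hv⟩ := (spectrum.mem_resolventSet_iff.1 hmem : IsUnit _)
    have : (v : X →L[ℂ] X) * (v⁻¹ : (X →L[ℂ] X)ˣ) = 1 := v.mul_inv
    have h2 := congrArg (fun L : X →L[ℂ] X => ι (L u) lam) this
    simp [hv, hS0, hu lam hl, Algebra.algebraMap_eq_smul_one] at h2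
  · apply aux_spec Tb hTrad
    intro lam hl hmem
    obtain ⟨v, hv⟩ := (spectrum.mem_resolventSet_iff.1 hmem : IsUnit _)
    obtain ⟨B, hB⟩ := aux_unit' Sb hSrad lam hl
    have hTu : Tb u = 0 := by
      have hSTu : Sb (Tb u) = 0 := by
        have := hsub u
        rw [hu 0 hzero, one_smul] at this
        simpa using this
      have := hTS (Tb u)
      rw [hSTu, map_zero] at this
      exact this.symm
    have hk := congrArg Tb (hB u)
    rw [map_sub, map_smul, hTS, hTu] at hk
    have hvk : (v : X →L[ℂ] X) (B u) = 0 := by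
      rw [hv]
      simp only [Algebra.algebraMap_eq_smul_one, ContinuousLinearMap.sub_apply,
        ContinuousLinearMap.smul_apply, ContinuousLinearMap.one_apply]
      rw [← neg_sub, hk, neg_zero]
    have : (v⁻¹ : (X →L[ℂ] X)ˣ) * (v : X →L[ℂ] X) = 1 := v.inv_mul
    have h2 := congrArg (fun L : X →L[ℂ] X => L (B u)) this
    simp only [ContinuousLinearMap.mul_apply, hvk, map_zero, ContinuousLinearMap.one_apply] at h2
    have h3 := hB u
    rw [← h2] at h3
    simp at h3
    exact hu0 h3.symm
end
end

section
/- Let E ∈ 𝓔 and let M be a linear subspace of E having the division property. Then the closure of M in E also has the division property. -/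
noncomputable section

open Metric Set Filter Topology
open scoped Classical

theorem fdiv_aux (F G : ℂ → ℂ) (hF : F ∈ HolDisc) (hG : G ∈ HolDisc) (lam : ℂ)
    (hl : lam ∈ Metric.ball (0:ℂ) 1)
    (h : ∀ z, G z - lam * fdivB 0 G z = fdivB 0 F z) : G = fdivB lam F := by
  have key : ∀ z ∈ Metric.ball (0:ℂ) 1, (z - lam) * G z = F z - F 0 - lam * G 0 := by
    intro z hz
    by_cases h0 : z = 0
    · subst h0; ring
    · have := h z
      simp only [fdivB, hz, h0, if_true, if_false, sub_zero] at this
      field_simp at this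
      linear_combination this
  have kl := key lam hl
  have key2 : ∀ z ∈ Metric.ball (0:ℂ) 1, (z - lam) * G z = F z - F lam := by
    intro z hz
    rw [key z hz]
    linear_combination -kl
  funext z
  by_cases hz : z ∈ Metric.ball (0:ℂ) 1
  · by_cases hzl : z = lam
    · subst hzl
      simp only [fdivB, hz, if_true]
      have hn : Metric.ball (0:ℂ) 1 ∈ 𝓝 z := Metric.isOpen_ball.mem_nhds hz
      have hGd := (hG.1.differentiableAt hn).hasDerivAt
      have h1 : HasDerivAt (fun w => F z + (w - z) * G w) (1 * G z + (z - z) * deriv G z) z :=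
        (((hasDerivAt_id z).sub_const z).mul hGd).const_add (F z)
      have h2 : F =ᶠ[𝓝 z] (fun w => F z + (w - z) * G w) := by
        filter_upwards [hn] with w hw
        rw [key2 w hw]; ring
      rw [(h1.congr_of_eventuallyEq h2).deriv]; ring
    · have : z - lam ≠ 0 := sub_ne_zero.mpr hzl
      simp only [fdivB, hz, hzl, if_true, if_false]
      rw [← key2 z hz]; field_simp
  · simp only [fdivB, hz, if_false]
    exact hG.2 z hz

/-- (Proposition 3.3) If a linear subspace `M` of `E ∈ 𝓔` has the
division property, then so does its closure in `E`. -/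
theorem statement7
    {X : Type*} [NormedAddCommGroup X] [NormedSpace ℂ X] [CompleteSpace X]
    (ι : X →ₗ[ℂ] (ℂ → ℂ)) (hinj : Function.Injective ι)
    (hhol : ∀ f : X, ι f ∈ HolDisc)
    (Sb Tb : X →L[ℂ] X)
    (hSb : ∀ f : X, ι (Sb f) = shiftL (ι f))
    (hTb : ∀ f : X, ι (Tb f) = fdivB 0 (ι f))
    (hSrad : spectralRadius ℂ Sb ≤ 1) (hTrad : spectralRadius ℂ Tb ≤ 1)
    (M : Submodule ℂ X)
    (hdiv : ∀ f ∈ M, ∀ lam ∈ Metric.ball (0:ℂ) 1,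
      ι f lam = 0 → ∃ g ∈ M, ι g = fdivB lam (ι f)) :
    ∀ f ∈ M.topologicalClosure, ∀ lam ∈ Metric.ball (0:ℂ) 1,
      ι f lam = 0 → ∃ g ∈ M.topologicalClosure, ι g = fdivB lam (ι f) := by
  intro f hf lam hl hfl
  have hlt : (‖lam‖₊ : ENNReal) < (spectralRadius ℂ Tb)⁻¹ := by
    refine lt_of_lt_of_le ?_ (ENNReal.one_le_inv.mpr hTrad)
    have : ‖lam‖ < 1 := by simpa using hl
    exact_mod_cast this
  have hu : IsUnit (1 - lam • Tb) := spectrum.isUnit_one_sub_smul_of_lt_inv_radius hlt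
  obtain ⟨B, hB⟩ := hu.exists_right_inv
  let R : X →L[ℂ] X := B * Tb
  have hR : ∀ f, ι (R f) = fdivB lam (ι f) := by
    intro f
    refine fdiv_aux _ _ (hhol f) (hhol _) lam hl ?_
    intro z
    have h1 : R f - lam • Tb (R f) = Tb f := by
      have := congrArg (fun A : X →L[ℂ] X => A (Tb f)) hB
      simpa [R] using this
    have h2 := congrFun (congrArg ι h1) z
    simpa [hTb] using h2
  let φ : X →ₗ[ℂ] ℂ := (LinearMap.proj lam).comp ι
  have hφ : ∀ f, φ f = ι f lam := fun f => rfl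
  let P : X →L[ℂ] X := 1 - (Sb - lam • 1) * R
  have hP : ∀ f z, ι (P f) z = ι f z - (z - lam) * fdivB lam (ι f) z := by
    intro f z
    simp [P, hSb, hR, shiftL]
    ring
  have hker : (LinearMap.ker φ : Set X) = P ⁻¹' {0} := by
    ext f
    simp only [SetLike.mem_coe, LinearMap.mem_ker, hφ, mem_preimage, mem_singleton_iff]
    constructor
    · intro h
      apply hinj
      funext z
      rw [hP, map_zero]
      by_cases hz : z ∈ Metric.ball (0:ℂ) 1
      · by_cases hzl : z = lam
        · subst hzl; simp [h]
        · have : z - lam ≠ 0 := sub_ne_zero.mpr hzl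
          simp only [fdivB, hz, hzl, if_true, if_false, h, Pi.zero_apply]
          field_simp
          ring
      · simp [fdivB, hz, (hhol f).2 z hz]
    · intro h
      have := hP f lam
      rw [h, map_zero] at this
      simpa using this.symm
  have hcont : Continuous φ := by
    apply LinearMap.continuous_of_isClosed_ker
    rw [hker]
    exact isClosed_singleton.preimage P.continuous
  obtain ⟨h, hM, hh⟩ : ∃ h ∈ M, ∀ m ∈ M, φ (m - φ m • h) = 0 := by
    by_cases hall : ∀ m ∈ M, φ m = 0
    · exact ⟨0, M.zero_mem, fun m hm => by simp [hall m hm]⟩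
    · push Not at hall
      obtain ⟨k, hk, hk0⟩ := hall
      refine ⟨(φ k)⁻¹ • k, M.smul_mem _ hk, fun m hm => ?_⟩
      simp [hk0]
  refine ⟨R f, ?_, hR f⟩
  have hQ : Continuous (fun x => R (x - φ x • h)) := by fun_prop
  have hmem := map_mem_closure (t := (M : Set X)) hQ hf (fun m hm => by
    obtain ⟨g, hg, hg'⟩ := hdiv (m - φ m • h) (M.sub_mem hm (M.smul_mem _ hM)) lam hl (hh m hm)
    have : R (m - φ m • h) = g := hinj (by rw [hR, hg'])
    rw [this]; exact hg)
  have hf0 : φ f = 0 := hfl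
  have hres : R f ∈ closure (M : Set X) := by simpa [hf0] using hmem
  exact hres
end
end

section
/- Let E ∈ 𝓔, let M ≠ {0} be a closed linear subspace of E, and let Ω(M) be the set of all λ ∈ 𝔻 such that M has the division property at λ. Then either Ω(M) = ∅ or Ω(M) = 𝔻 ∖ Z(M). -/
noncomputable section

open Metric Set Filter Topology
open scoped Classical

lemma aux_mul_fdivB_zero (F : ℂ → ℂ) (z : ℂ) (hz : z ∈ ball (0:ℂ) 1) :
    z * fdivB 0 F z = F z - F 0 := by
  unfold fdivB
  rw [if_pos hz]
  split_ifs with h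
  · simp [h]
  · field_simp
    simp [mul_comm]

lemma aux_fdivB_eq (lam : ℂ) (hl : lam ∈ ball (0:ℂ) 1) (F G : ℂ → ℂ)
    (hG : G ∈ HolDisc)
    (h : ∀ z ∈ ball (0:ℂ) 1, (z - lam) * G z = F z - F lam) : G = fdivB lam F := by
  funext z
  unfold fdivB
  split_ifs with hz hzl
  · subst hzl
    have hd : DifferentiableAt ℂ G z := hG.1.differentiableAt (isOpen_ball.mem_nhds hl)
    have h1 : HasDerivAt (fun w => (w - z) * G w + F z) (1 * G z + (z - z) * deriv G z) z :=
      (((hasDerivAt_id z).sub_const z).mul hd.hasDerivAt).add_const _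
    have h2 : F =ᶠ[𝓝 z] (fun w => (w - z) * G w + F z) := by
      filter_upwards [isOpen_ball.mem_nhds hl] with w hw
      rw [h w hw]; ring
    rw [h2.deriv_eq, h1.deriv]; ring
  · rw [eq_div_iff (sub_ne_zero.2 hzl), ← h z hz]; ring
  · exact hG.2 z hz

lemma aux_fdivB_mul (lam : ℂ) (hl : lam ∈ ball (0:ℂ) 1) (F : ℂ → ℂ) (z : ℂ)
    (hz : z ∈ ball (0:ℂ) 1) : (z - lam) * fdivB lam F z = F z - F lam := by
  unfold fdivB
  rw [if_pos hz]
  split_ifs with h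
  · simp [h]
  · have := sub_ne_zero.2 h
    field_simp

lemma aux_zero_of_pow (F : ℂ → ℂ) (hF : F ∈ HolDisc) (lam : ℂ) (hl : lam ∈ ball (0:ℂ) 1)
    (h : ∀ n : ℕ, ∃ G ∈ HolDisc, ∀ z ∈ ball (0:ℂ) 1, F z = (z - lam) ^ n * G z) : F = 0 := by
  have hFa : AnalyticOnNhd ℂ F (ball 0 1) := hF.1.analyticOnNhd isOpen_ball
  have ht : analyticOrderAt F lam = ⊤ := by
    rw [ENat.eq_top_iff_forall_ge]
    intro n
    rw [natCast_le_analyticOrderAt (hFa lam hl)]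
    obtain ⟨G, hG, hFG⟩ := h n
    refine ⟨G, hG.1.analyticOnNhd isOpen_ball lam hl, ?_⟩
    filter_upwards [isOpen_ball.mem_nhds hl] with w hw
    simpa using hFG w hw
  rw [analyticOrderAt_eq_top] at ht
  have := hFa.eqOn_zero_of_preconnected_of_eventuallyEq_zero
    (convex_ball (0:ℂ) 1).isPreconnected hl ht
  funext z
  by_cases hz : z ∈ ball (0:ℂ) 1
  · exact this hz
  · exact hF.2 z hz

/-- (Proposition 3.4) For a nonzero closed subspace `M` of `E ∈ 𝓔`,
the set `Ω(M)` of points of `𝔻` at which `M` has the division property is either empty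
or equal to `𝔻 ∖ Z(M)`. -/
theorem statement8
    {X : Type*} [NormedAddCommGroup X] [NormedSpace ℂ X] [CompleteSpace X]
    (ι : X →ₗ[ℂ] (ℂ → ℂ)) (hinj : Function.Injective ι)
    (hhol : ∀ f : X, ι f ∈ HolDisc)
    (Sb Tb : X →L[ℂ] X)
    (hSb : ∀ f : X, ι (Sb f) = shiftL (ι f))
    (hTb : ∀ f : X, ι (Tb f) = fdivB 0 (ι f))
    (hSrad : spectralRadius ℂ Sb ≤ 1) (hTrad : spectralRadius ℂ Tb ≤ 1)
    (M : Submodule ℂ X) (hMc : IsClosed (M : Set X)) (hM0 : M ≠ ⊥) :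
    {lam : ℂ | lam ∈ Metric.ball (0:ℂ) 1 ∧
        ∀ f ∈ M, ι f lam = 0 → ∃ g ∈ M, ι g = fdivB lam (ι f)} = ∅
    ∨ {lam : ℂ | lam ∈ Metric.ball (0:ℂ) 1 ∧
        ∀ f ∈ M, ι f lam = 0 → ∃ g ∈ M, ι g = fdivB lam (ι f)}
      = {lam : ℂ | lam ∈ Metric.ball (0:ℂ) 1 ∧ ∃ f ∈ M, ι f lam ≠ 0} := by
  -- the operators `R lam`
  have hlt : ∀ z ∈ ball (0:ℂ) 1, (‖z‖₊ : ENNReal) < (spectralRadius ℂ Tb)⁻¹ := by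
    intro z hz
    have h1 : (1:ENNReal) ≤ (spectralRadius ℂ Tb)⁻¹ := by
      rw [ENNReal.one_le_inv]; exact hTrad
    refine lt_of_lt_of_le ?_ h1
    have : ‖z‖ < 1 := by simpa using hz
    exact_mod_cast this
  set R : ℂ → X →L[ℂ] X := fun z => Ring.inverse (1 - z • Tb) * Tb with hR
  have hRd : ∀ f : X, DifferentiableOn ℂ (fun z => R z f) (ball (0:ℂ) 1) := by
    intro f z hz
    have hu := spectrum.isUnit_one_sub_smul_of_lt_inv_radius (hlt z hz)
    have H₁ : Differentiable ℂ fun w : ℂ => 1 - w • Tb :=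
      (differentiable_id.smul_const Tb).const_sub 1
    have H2 : DifferentiableAt ℂ (fun w : ℂ => Ring.inverse (1 - w • Tb)) z :=
      DifferentiableAt.comp (g := Ring.inverse) z (differentiableAt_inverse (𝕜 := ℂ) hu)
        H₁.differentiableAt
    exact (H2.clm_apply (differentiableAt_const (Tb f))).differentiableWithinAt
  have hReq : ∀ z ∈ ball (0:ℂ) 1, ∀ f, R z f - z • Tb (R z f) = Tb f := by
    intro z hz f
    have hu := spectrum.isUnit_one_sub_smul_of_lt_inv_radius (hlt z hz)
    have h1 : (1 - z • Tb) * R z = Tb := by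
      rw [hR]; simp only
      rw [← mul_assoc, Ring.mul_inverse_cancel _ hu, one_mul]
    have h2 := congrArg (fun A : X →L[ℂ] X => A f) h1
    simpa using h2
  have hRi : ∀ lam ∈ ball (0:ℂ) 1, ∀ f, ι (R lam f) = fdivB lam (ι f) := by
    intro lam hl f
    have key : ∀ z ∈ ball (0:ℂ) 1,
        z * ι (R lam f) z - lam * (ι (R lam f) z - ι (R lam f) 0) = ι f z - ι f 0 := by
      intro z hz
      have h1 := congrFun (congrArg ι (hReq lam hl f)) z
      simp only [map_sub, map_smul, hTb, Pi.sub_apply, Pi.smul_apply, smul_eq_mul] at h1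
      rw [← aux_mul_fdivB_zero _ z hz, ← aux_mul_fdivB_zero _ z hz, ← h1]
      ring
    apply aux_fdivB_eq lam hl _ _ (hhol _)
    intro z hz
    linear_combination key z hz - key lam hl
  have hRm : ∀ lam ∈ ball (0:ℂ) 1, ∀ f, ∀ z ∈ ball (0:ℂ) 1,
      (z - lam) * ι (R lam f) z = ι f z - ι f lam := by
    intro lam hl f z hz
    rw [hRi lam hl, aux_fdivB_mul lam hl _ z hz]
  -- `R` is a left inverse
  have hext : ∀ lam : ℂ, ∀ f g : X, (∀ z ∈ ball (0:ℂ) 1, z ≠ lam → ι f z = ι g z) → f = g := by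
    intro lam f g h
    apply hinj
    funext z
    by_cases hz : z ∈ ball (0:ℂ) 1
    · by_cases hzl : z = lam
      · subst hzl
        have hf := ((hhol f).1.differentiableAt (isOpen_ball.mem_nhds hz)).continuousAt
        have hg := ((hhol g).1.differentiableAt (isOpen_ball.mem_nhds hz)).continuousAt
        refine tendsto_nhds_unique_of_eventuallyEq
          (hf.tendsto.mono_left (nhdsWithin_le_nhds (s := {z}ᶜ)))
          (hg.tendsto.mono_left nhdsWithin_le_nhds) ?_
        filter_upwards [self_mem_nhdsWithin, nhdsWithin_le_nhds (isOpen_ball.mem_nhds hz)]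
          with w hw hw2
        exact h w hw2 hw
      · exact h z hz hzl
    · rw [(hhol f).2 z hz, (hhol g).2 z hz]
  have hΩ : ∀ lam ∈ ball (0:ℂ) 1,
      ((∀ f ∈ M, ι f lam = 0 → ∃ g ∈ M, ι g = fdivB lam (ι f)) ↔
        ∀ f ∈ M, ι f lam = 0 → R lam f ∈ M) := by
    intro lam hl
    constructor
    · intro h f hf h0
      obtain ⟨g, hg, hge⟩ := h f hf h0
      rw [← hRi lam hl f] at hge
      rwa [← hinj hge]
    · intro h f hf h0
      exact ⟨_, h f hf h0, hRi lam hl f⟩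
  -- Ω is disjoint from Z
  have hZ : ∀ lam ∈ ball (0:ℂ) 1, (∀ f ∈ M, ι f lam = 0 → R lam f ∈ M) →
      ∃ f ∈ M, ι f lam ≠ 0 := by
    intro lam hl h
    by_contra! hc
    apply hM0
    rw [Submodule.eq_bot_iff]
    intro f hf
    apply hinj
    rw [map_zero]
    apply aux_zero_of_pow _ (hhol f) lam hl
    have : ∀ n : ℕ, ∃ g ∈ M, ∀ z ∈ ball (0:ℂ) 1, ι f z = (z - lam) ^ n * ι g z := by
      intro n
      induction n with
      | zero => exact ⟨f, hf, by simp⟩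
      | succ n ih =>
        obtain ⟨g, hg, hge⟩ := ih
        refine ⟨R lam g, h g hg (hc g hg), fun z hz => ?_⟩
        rw [pow_succ, mul_assoc, hRm lam hl g z hz, hc g hg, sub_zero, hge z hz]
    intro n
    obtain ⟨g, _, hge⟩ := this n
    exact ⟨ι g, hhol g, hge⟩
  -- Ω is open
  have hopen : ∀ l0 ∈ ball (0:ℂ) 1, (∀ f ∈ M, ι f l0 = 0 → R l0 f ∈ M) →
      ∀ᶠ lam in 𝓝 l0, ∀ f ∈ M, ι f lam = 0 → R lam f ∈ M := by
    intro l0 hl0 h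
    obtain ⟨k, hk, hk0⟩ := hZ l0 hl0 h
    set P : X →L[ℂ] X := 1 - (Sb - l0 • 1) * R l0 with hP
    have hPi : ∀ f, ∀ z ∈ ball (0:ℂ) 1, ι (P f) z = ι f l0 := by
      intro f z hz
      have h1 := hRm l0 hl0 f z hz
      simp [hP, hSb, shiftL]
      linear_combination -h1
    have hPk : P k ≠ 0 := by
      intro h0
      have := hPi k l0 hl0
      rw [h0] at this
      simp at this
      exact hk0 this.symm
    obtain ⟨ψ, hψ⟩ := SeparatingDual.exists_eq_one (R := ℂ) hPk
    have hψf : ∀ f, ψ (P f) * ι k l0 = ι f l0 := by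
      intro f
      have h1 : ι k l0 • P f = ι f l0 • P k := by
        apply hext 2
        intro z hz _
        simp only [map_smul, Pi.smul_apply, smul_eq_mul, hPi _ z hz]
        ring
      have h2 := congrArg ψ h1
      simp only [map_smul, smul_eq_mul, hψ] at h2
      linear_combination h2
    set A : X →L[ℂ] X := R l0 * (1 - (ψ ∘L P).smulRight k) with hA
    have hAf : ∀ f, A f = R l0 (f - ψ (P f) • k) := by
      intro f; simp [hA]
    have hAM : ∀ f ∈ M, A f ∈ M := by
      intro f hf
      rw [hAf]
      apply h _ (M.sub_mem hf (M.smul_mem _ hk))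
      simp [hψf]
    have hAz : ∀ f, ∀ z ∈ ball (0:ℂ) 1, (z - l0) * ι (A f) z = ι f z - ψ (P f) * ι k z := by
      intro f z hz
      rw [hAf, hRm l0 hl0 _ z hz]
      simp [hψf]
    have hsmall : ∀ᶠ lam in 𝓝 l0, ‖(lam - l0) • A‖ < 1 := by
      have : ContinuousAt (fun lam : ℂ => ‖(lam - l0) • A‖) l0 := by fun_prop
      apply this.eventually_lt continuousAt_const
      simp
    filter_upwards [hsmall, isOpen_ball.mem_nhds hl0] with lam hs hl f hf hf0
    set g := R lam f with hg
    have hgA : g - ((lam - l0) • A) g = A f := by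
      apply hext l0
      intro z hz hzl
      apply mul_left_cancel₀ (sub_ne_zero.2 hzl)
      have e1 := hRm lam hl f z hz
      have e2 := hRm lam hl f l0 hl0
      have e3 := hAz f z hz
      have e4 := hAz g z hz
      have e5 := hψf g
      have e6 := hψf f
      rw [← hg] at e1 e2
      rw [hf0, sub_zero] at e1 e2
      have e7 : (l0 - lam) * ψ (P g) = ψ (P f) := by
        apply mul_right_cancel₀ hk0
        linear_combination (l0 - lam) * e5 - e6 + e2
      simp only [map_sub, map_smul, ContinuousLinearMap.smul_apply, Pi.sub_apply, Pi.smul_apply,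
        smul_eq_mul]
      linear_combination e1 - e3 - (lam - l0) * e4 - ι k z * e7
    set B := (lam - l0) • A with hB
    have hBM : ∀ f ∈ M, B f ∈ M := fun f hf => M.smul_mem _ (hAM f hf)
    have hn : ∀ n : ℕ, g - (B ^ n) g ∈ M := by
      intro n
      induction n with
      | zero => simp
      | succ n ih =>
        have e : g - (B ^ (n+1)) g = A f + B (g - (B ^ n) g) := by
          rw [map_sub, ← hgA, pow_succ']
          simp
        rw [e]
        exact M.add_mem (hAM f hf) (hBM _ ih)
    have ht : Tendsto (fun n : ℕ => g - (B ^ n) g) atTop (𝓝 (g - (0 : X →L[ℂ] X) g)) := by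
      have h1 : Tendsto (fun n : ℕ => B ^ n) atTop (𝓝 0) := tendsto_pow_atTop_nhds_zero_of_norm_lt_one hs
      exact tendsto_const_nhds.sub (((ContinuousLinearMap.apply ℂ X g).continuous.tendsto _).comp h1)
    have := hMc.mem_of_tendsto ht (Eventually.of_forall hn)
    simpa using this
  -- conclusion
  rw [Set.eq_empty_iff_forall_notMem]
  by_cases hne : ∃ l0 ∈ ball (0:ℂ) 1, ∀ f ∈ M, ι f l0 = 0 → R l0 f ∈ M
  swap
  · left
    rintro lam ⟨hl, h⟩
    exact hne ⟨lam, hl, (hΩ lam hl).1 h⟩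
  right
  obtain ⟨l0, hl0, h0⟩ := hne
  ext lam
  constructor
  · rintro ⟨hl, h⟩
    exact ⟨hl, hZ lam hl ((hΩ lam hl).1 h)⟩
  rintro ⟨hl, k, hk, hk0⟩
  refine ⟨hl, (hΩ lam hl).2 ?_⟩
  intro f hf hf0
  haveI : IsClosed (M : Set X) := hMc
  set Q : X →L[ℂ] X ⧸ M := M.mkQL with hQ
  have hQ0 : ∀ x, Q x = 0 ↔ x ∈ M := fun x => Submodule.Quotient.mk_eq_zero M
  set Φ : ℂ → X ⧸ M := fun z => Q (ι k z • R z f - ι f z • R z k) with hΦ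
  have hΦd : DifferentiableOn ℂ Φ (ball (0:ℂ) 1) :=
    Q.differentiable.comp_differentiableOn
      (((hhol k).1.smul (hRd f)).sub ((hhol f).1.smul (hRd k)))
  have hΦ0 : Φ =ᶠ[𝓝 l0] 0 := by
    filter_upwards [hopen l0 hl0 h0] with z hz
    have := hz (ι k z • f - ι f z • k) (M.sub_mem (M.smul_mem _ hf) (M.smul_mem _ hk))
      (by simp [mul_comm])
    simp only [map_sub, map_smul] at this
    exact (hQ0 _).2 this
  have hz := (hΦd.analyticOnNhd isOpen_ball).eqOn_zero_of_preconnected_of_eventuallyEq_zero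
    (convex_ball (0:ℂ) 1).isPreconnected hl0 hΦ0 hl
  have hz2 := (hQ0 _).1 hz
  rw [hf0, zero_smul, sub_zero] at hz2
  exact (M.smul_mem_iff hk0).1 hz2
end
end

section
/- Let E ∈ 𝓔, and for λ ∈ 𝔻 let δ_λ ∈ E* be the evaluation functional f ↦ f(λ). If liminf_{|λ|→1⁻} ‖δ_λ‖ < +∞, then there exist ζ ∈ ℂ with |ζ| = 1 and a continuous linear functional φ ∈ E* such that φ(1) = 1, φ ∘ S|_E = ζ·φ, and Ker(φ) is a nontrivial closed z-invariant subspace of E having the division property. -/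
noncomputable section

open Metric Set Filter Topology
open scoped Classical

/-- (Proposition 4.1) If `liminf_{|λ|→1⁻} ‖δ_λ‖ < ∞` (expressed by the
existence of a sequence `λ_n ∈ 𝔻` with `|λ_n| → 1` and `‖δ_{λ_n}‖` bounded), then there
exist `ζ ∈ 𝕋` and `φ ∈ E*` with `φ(1) = 1`, `φ ∘ S = ζ φ`, such that `Ker φ` is a
nontrivial closed `z`-invariant subspace of `E` with the division property. -/
theorem statement10
    {X : Type*} [NormedAddCommGroup X] [NormedSpace ℂ X] [CompleteSpace X] [Nontrivial X]
    (ι : X →ₗ[ℂ] (ℂ → ℂ)) (hinj : Function.Injective ι)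
    (hhol : ∀ f : X, ι f ∈ HolDisc)
    (Sb Tb : X →L[ℂ] X)
    (hSb : ∀ f : X, ι (Sb f) = shiftL (ι f))
    (hTb : ∀ f : X, ι (Tb f) = fdivB 0 (ι f))
    (hSrad : spectralRadius ℂ Sb ≤ 1) (hTrad : spectralRadius ℂ Tb ≤ 1)
    -- E contains the constant function 1
    (e : X) (he : ι e = oneD)
    -- the evaluation functionals
    (δ : ℂ → (X →L[ℂ] ℂ)) (hδ : ∀ lam ∈ Metric.ball (0:ℂ) 1, ∀ f : X, δ lam f = ι f lam)
    -- liminf_{|λ| → 1⁻} ‖δ_λ‖ < +∞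
    (hliminf : ∃ (C : ℝ) (lamseq : ℕ → ℂ), (∀ n, lamseq n ∈ Metric.ball (0:ℂ) 1)
      ∧ Filter.Tendsto (fun n => ‖lamseq n‖) Filter.atTop (nhds 1)
      ∧ ∀ n, ‖δ (lamseq n)‖ ≤ C) :
    ∃ ζ : ℂ, ‖ζ‖ = 1 ∧ ∃ φ : X →L[ℂ] ℂ,
      φ e = 1
      ∧ (∀ f : X, φ (Sb f) = ζ * φ f)
      ∧ LinearMap.ker φ.toLinearMap ≠ ⊥
      ∧ LinearMap.ker φ.toLinearMap ≠ ⊤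
      ∧ IsClosed ((LinearMap.ker φ.toLinearMap : Submodule ℂ X) : Set X)
      ∧ (∀ f ∈ LinearMap.ker φ.toLinearMap, Sb f ∈ LinearMap.ker φ.toLinearMap)
      ∧ (∀ f ∈ LinearMap.ker φ.toLinearMap, ∀ lam ∈ Metric.ball (0:ℂ) 1,
          ι f lam = 0 →
            ∃ g ∈ LinearMap.ker φ.toLinearMap, ι g = fdivB lam (ι f)) := by
  obtain ⟨C, l, hl, hlim, hC⟩ := hliminf
  have hK := WeakDual.isCompact_closedBall (𝕜 := ℂ) (E := X) 0 C
  let U : Ultrafilter ℕ := hyperfilter ℕ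
  have hU : (U : Filter ℕ) ≤ atTop := Nat.hyperfilter_le_atTop
  let d : ℕ → WeakDual ℂ X := fun n => StrongDual.toWeakDual (δ (l n))
  obtain ⟨ψ, -, hψ⟩ := hK.ultrafilter_le_nhds (U.map d) (by
    rw [le_principal_iff, Ultrafilter.mem_coe, Ultrafilter.mem_map]
    refine Filter.mem_of_superset Filter.univ_mem ?_
    intro n _
    have := hC n
    simpa [d, mem_closedBall] using this)
  obtain ⟨ζ, -, hζ⟩ := (isCompact_closedBall (0:ℂ) 1).ultrafilter_le_nhds (U.map l) (by
    rw [le_principal_iff, Ultrafilter.mem_coe, Ultrafilter.mem_map]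
    refine Filter.mem_of_superset Filter.univ_mem ?_
    intro n _
    exact ball_subset_closedBall (hl n))
  have hζ' : Tendsto l U (𝓝 ζ) := hζ
  have hψ' : Tendsto d U (𝓝 ψ) := hψ
  have hζ1 : ‖ζ‖ = 1 := tendsto_nhds_unique hζ'.norm (hlim.mono_left hU)
  let φ : X →L[ℂ] ℂ := WeakDual.toStrongDual ψ
  have hφ : ∀ f : X, Tendsto (fun n => ι f (l n)) U (𝓝 (φ f)) := by
    intro f
    have h := ((WeakDual.eval_continuous f).tendsto ψ).comp hψ'
    refine Tendsto.congr ?_ h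
    intro n
    exact hδ _ (hl n) f
  have h1 : φ e = 1 := by
    refine tendsto_nhds_unique (hφ e) (Tendsto.congr ?_ tendsto_const_nhds)
    intro n
    rw [he, oneD, if_pos (hl n)]
  have hS : ∀ f : X, φ (Sb f) = ζ * φ f := by
    intro f
    refine tendsto_nhds_unique (hφ (Sb f)) (Tendsto.congr ?_ (hζ'.mul (hφ f)))
    intro n
    rw [hSb]; rfl
  refine ⟨ζ, hζ1, φ, h1, hS, ?_, ?_, ?_, ?_, ?_⟩
  · intro hbot
    have hm : Sb e - ζ • e ∈ LinearMap.ker φ.toLinearMap := by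
      rw [LinearMap.mem_ker]
      simp [hS, h1]
    rw [hbot, Submodule.mem_bot] at hm
    have h2 := congrArg (fun x => ι x 0) hm
    have h0 : ζ = 0 := by
      simpa [hSb, he, oneD, shiftL] using h2
    simp [h0] at hζ1
  · intro htop
    have hm : e ∈ LinearMap.ker φ.toLinearMap := by rw [htop]; trivial
    rw [LinearMap.mem_ker] at hm
    have : φ e = 0 := hm
    rw [h1] at this
    exact one_ne_zero this
  · exact φ.isClosed_ker
  · intro f hf
    rw [LinearMap.mem_ker] at hf ⊢
    have hf' : φ f = 0 := hf
    change φ (Sb f) = 0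
    rw [hS, hf', mul_zero]
  · intro f hf lam hlam hz
    have hf' : φ f = 0 := hf
    have hn : ‖lam‖ < 1 := by simpa using hlam
    obtain ⟨g, hg⟩ : ∃ g : X, g - lam • Tb g = Tb f := by
      by_cases h0 : lam = 0
      · exact ⟨Tb f, by simp [h0]⟩
      have hr : lam⁻¹ ∈ resolventSet ℂ Tb := by
        apply spectrum.mem_resolventSet_of_spectralRadius_lt
        refine lt_of_le_of_lt hTrad ?_
        rw [ENNReal.one_lt_coe_iff, ← NNReal.coe_lt_coe]
        have : 1 < ‖lam‖⁻¹ := (one_lt_inv₀ (norm_pos_iff.2 h0)).2 hn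
        simpa using this
      obtain ⟨u, hu⟩ := (spectrum.mem_resolventSet_iff.1 hr).exists_right_inv
      refine ⟨u (lam⁻¹ • Tb f), ?_⟩
      have h3 := congrArg (fun A : X →L[ℂ] X => lam • A (lam⁻¹ • Tb f)) hu
      have h4 : ∀ x : X, (algebraMap ℂ (X →L[ℂ] X) lam⁻¹) x = lam⁻¹ • x := by
        intro x; rw [Algebra.algebraMap_eq_smul_one]; rfl
      simp only [ContinuousLinearMap.mul_apply, ContinuousLinearMap.sub_apply, h4,
        ContinuousLinearMap.one_apply, smul_sub, smul_inv_smul₀ h0] at h3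
      exact h3
    have hT : ∀ (x : X) (z : ℂ), z ∈ ball (0:ℂ) 1 → z * ι (Tb x) z = ι x z - ι x 0 := by
      intro x z hz
      rw [hTb, fdivB, if_pos hz]
      by_cases h0 : z = 0
      · simp [h0]
      · rw [if_neg h0, sub_zero]; field_simp
    have key : ∀ z ∈ ball (0:ℂ) 1, (z - lam) * ι g z + lam * ι g 0 = ι f z - ι f 0 := by
      intro z hzb
      have h5 := congrArg (fun x => ι x z) hg
      simp only [map_sub, map_smul, Pi.sub_apply, Pi.smul_apply, smul_eq_mul] at h5
      rw [← hT f z hzb, ← h5]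
      linear_combination (lam) * hT g z hzb
    have k1 := key lam hlam
    have key2 : ∀ z ∈ ball (0:ℂ) 1, ι f z = (z - lam) * ι g z := by
      intro z hzb
      linear_combination k1 - key z hzb + hz
    have hSg : Sb g - lam • g = f := by
      apply hinj
      funext z
      simp only [map_sub, map_smul, Pi.sub_apply, Pi.smul_apply, smul_eq_mul, hSb]
      change z * ι g z - lam * ι g z = _
      by_cases hzb : z ∈ ball (0:ℂ) 1
      · rw [key2 z hzb]; ring
      · rw [(hhol g).2 z hzb, (hhol f).2 z hzb]; ring
    refine ⟨g, ?_, ?_⟩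
    · have h6 : (ζ - lam) * φ g = 0 := by
        have := congrArg φ hSg
        rw [map_sub, map_smul, hS, hf', smul_eq_mul] at this
        linear_combination this
      rcases mul_eq_zero.1 h6 with h | h
      · exfalso
        rw [sub_eq_zero.1 h] at hζ1
        linarith
      · exact h
    · funext z
      unfold fdivB
      by_cases hzb : z ∈ ball (0:ℂ) 1
      · rw [if_pos hzb]
        by_cases hzl : z = lam
        · rw [if_pos hzl, hzl]
          have hd : DifferentiableAt ℂ (ι g) lam :=
            (hhol g).1.differentiableAt (isOpen_ball.mem_nhds hlam)
          have hder : HasDerivAt (fun z => (z - lam) * ι g z)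
              (1 * ι g lam + (lam - lam) * deriv (ι g) lam) lam :=
            ((hasDerivAt_id lam).sub_const lam).mul hd.hasDerivAt
          have heq : ι f =ᶠ[𝓝 lam] fun z => (z - lam) * ι g z := by
            filter_upwards [isOpen_ball.mem_nhds hlam] with z hz using key2 z hz
          rw [heq.deriv_eq, hder.deriv]; ring
        · rw [if_neg hzl, hz, key2 z hzb, sub_zero]
          rw [mul_div_cancel_left₀ _ (sub_ne_zero.2 hzl)]
      · rw [if_neg hzb, (hhol g).2 z hzb]
end
end

section
/- Let M be a closed z-invariant subspace of the Fréchet space Hol(𝔻), equipped with the topology of uniform convergence on compact subsets of 𝔻, such that {0} ≠ M ≠ Hol(𝔻). Then Z(M) ≠ ∅, i.e., there exists λ ∈ 𝔻 such that f(λ) = 0 for every f ∈ M. In particular, Hol(𝔻) has no nontrivial zero-free closed z-invariant subspace, and no proper nonzero closed z-invariant subspace of Hol(𝔻) has the division property. -/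
noncomputable section

open Metric Set Filter Topology
open scoped Classical

lemma aux_fdivB_mem {f : ℂ → ℂ} (hf : f ∈ HolDisc) {l : ℂ} (hl : l ∈ ball (0:ℂ) 1) :
    fdivB l f ∈ HolDisc := by
  refine ⟨?_, fun z hz => by simp only [fdivB, if_neg hz]⟩
  have h := (Complex.differentiableOn_dslope (isOpen_ball.mem_nhds hl)).mpr hf.1
  refine h.congr fun z hz => ?_
  simp only [fdivB, if_pos hz]
  split_ifs with h1
  · subst h1; simp
  · rw [dslope_of_ne _ h1, slope_def_field]

lemma aux_fdivB_eq_s11 (f : ℂ → ℂ) (l : ℂ) {z : ℂ} (hz : z ∈ ball (0:ℂ) 1) :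
    f z = f l + (z - l) * fdivB l f z := by
  simp only [fdivB, if_pos hz]
  split_ifs with h1
  · subst h1; simp
  · have : z - l ≠ 0 := sub_ne_zero.mpr h1
    field_simp; ring

lemma aux_poly_approx {F : ℂ → ℂ} {R r : ℝ} (hF : DifferentiableOn ℂ F (closedBall (0:ℂ) R))
    (hr : 0 ≤ r) (hrR : r < R) {ε : ℝ} (hε : 0 < ε) :
    ∃ q : Polynomial ℂ, ∀ z ∈ closedBall (0:ℂ) r, ‖q.eval z - F z‖ < ε := by
  lift R to NNReal using hr.trans hrR.le
  have hR : 0 < R := by exact_mod_cast hr.trans_lt hrR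
  obtain ⟨r', h1, h2⟩ := exists_between hrR
  lift r' to NNReal using hr.trans h1.le
  have hp := hF.hasFPowerSeriesOnBall hR
  have hu := hp.tendstoUniformlyOn (r' := r') (by exact_mod_cast h2)
  rw [Metric.tendstoUniformlyOn_iff] at hu
  obtain ⟨n, hn⟩ := (hu ε hε).exists
  refine ⟨∑ k ∈ Finset.range n, Polynomial.C ((cauchyPowerSeries F 0 R).coeff k) * Polynomial.X ^ k,
    fun z hz => ?_⟩
  have := hn z (closedBall_subset_ball h1 hz)
  rw [dist_comm, dist_eq_norm, zero_add] at this
  have e : Polynomial.eval z (∑ k ∈ Finset.range n,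
      Polynomial.C ((cauchyPowerSeries F 0 R).coeff k) * Polynomial.X ^ k) =
      (cauchyPowerSeries F 0 R).partialSum n z := by
    simp only [Polynomial.eval_finsetSum, FormalMultilinearSeries.partialSum,
      FormalMultilinearSeries.apply_eq_pow_smul_coeff]
    refine Finset.sum_congr rfl fun k _ => ?_
    rw [Polynomial.eval_mul, Polynomial.eval_C, Polynomial.eval_pow, Polynomial.eval_X,
      smul_eq_mul, mul_comm]
  rw [e]
  exact this

lemma aux_poly_mul (M : Submodule ℂ (ℂ → ℂ)) (hMS : ∀ f ∈ M, shiftL f ∈ M)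
    {f : ℂ → ℂ} (hf : f ∈ M) (q : Polynomial ℂ) : (fun z => q.eval z * f z) ∈ M := by
  induction q using Polynomial.induction_on' with
  | add p q hp hq =>
    convert M.add_mem hp hq using 1
    funext z; simp [add_mul]
  | monomial n a =>
    have h : (fun z => z ^ n * f z) ∈ M := by
      induction n with
      | zero => simpa using hf
      | succ n ih =>
        convert hMS _ ih using 1
        funext z; simp [shiftL]; ring
    convert M.smul_mem a h using 1
    funext z; simp [mul_assoc]

def ClosedHol (M : Submodule ℂ (ℂ → ℂ)) : Prop :=
  ∀ (u : ℕ → (ℂ → ℂ)) (g : ℂ → ℂ), (∀ n, u n ∈ M) → g ∈ HolDisc →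
      (∀ K : Set ℂ, K ⊆ Metric.ball (0:ℂ) 1 → IsCompact K →
        TendstoUniformlyOn u g Filter.atTop K) → g ∈ M

lemma aux_closed (M : Submodule ℂ (ℂ → ℂ)) (hc : ClosedHol M) {g : ℂ → ℂ} (hg : g ∈ HolDisc)
    (h : ∀ r : ℝ, 0 ≤ r → r < 1 → ∀ ε > 0, ∃ u ∈ M, ∀ z ∈ closedBall (0:ℂ) r, ‖u z - g z‖ < ε) :
    g ∈ M := by
  have hpos : ∀ n : ℕ, (0:ℝ) < 1 / ((n:ℝ) + 1) := fun n => Nat.one_div_pos_of_nat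
  have hle : ∀ n : ℕ, 1 / ((n:ℝ) + 1) ≤ 1 := fun n => by
    rw [div_le_one (by positivity)]; linarith [n.cast_nonneg (α := ℝ)]
  have h' := fun n : ℕ => h (1 - 1 / ((n:ℝ) + 1)) (by linarith [hle n])
    (by linarith [hpos n]) (1 / ((n:ℝ) + 1)) (hpos n)
  choose u hu hu2 using h'
  refine hc u g hu hg fun K hK hKc => ?_
  have : ∃ r : ℝ, r < 1 ∧ K ⊆ closedBall (0:ℂ) r := by
    rcases K.eq_empty_or_nonempty with rfl | hne
    · exact ⟨0, by norm_num, by simp⟩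
    · obtain ⟨x, hx, hmax⟩ := hKc.exists_isMaxOn hne continuous_norm.continuousOn
      refine ⟨‖x‖, by simpa using hK hx, fun z hz => ?_⟩
      simpa using hmax hz
  obtain ⟨r, hr, hKr⟩ := this
  rw [Metric.tendstoUniformlyOn_iff]
  intro ε hε
  have ht := tendsto_one_div_add_atTop_nhds_zero_nat (𝕜 := ℝ)
  filter_upwards [ht.eventually (gt_mem_nhds hε),
    ht.eventually (gt_mem_nhds (sub_pos.mpr hr))] with n h1 h2 z hz
  rw [dist_comm, dist_eq_norm]
  refine (hu2 n z ?_).trans h1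
  exact closedBall_subset_closedBall (by linarith) (hKr hz)

lemma aux_bdd {f : ℂ → ℂ} (hf : f ∈ HolDisc) {r : ℝ} (hr : r < 1) :
    ∃ C > 0, ∀ z ∈ closedBall (0:ℂ) r, ‖f z‖ ≤ C := by
  obtain ⟨C, hC⟩ := (isCompact_closedBall (0:ℂ) r).exists_bound_of_continuousOn
    (hf.1.continuousOn.mono (closedBall_subset_ball hr))
  exact ⟨max C 1, by positivity, fun z hz => (hC z hz).trans (le_max_left _ _)⟩

lemma aux_ideal (M : Submodule ℂ (ℂ → ℂ)) (hM : (M : Set (ℂ → ℂ)) ⊆ HolDisc)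
    (hMS : ∀ f ∈ M, shiftL f ∈ M) (hc : ClosedHol M) {f g : ℂ → ℂ}
    (hf : f ∈ M) (hg : g ∈ HolDisc) : (fun z => g z * f z) ∈ M := by
  refine aux_closed M hc ⟨hg.1.mul (hM hf).1, fun z hz => by simp [hg.2 z hz]⟩ ?_
  intro r hr0 hr ε hε
  obtain ⟨C, hC, hb⟩ := aux_bdd (hM hf) hr
  obtain ⟨R, h1, h2⟩ := exists_between hr
  obtain ⟨q, hq⟩ := aux_poly_approx (hg.1.mono (closedBall_subset_ball h2)) hr0 h1 (div_pos hε hC)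
  refine ⟨_, aux_poly_mul M hMS hf q, fun z hz => ?_⟩
  rw [← sub_mul, norm_mul]
  calc _ ≤ ‖q.eval z - g z‖ * C := by gcongr; exact hb z hz
    _ < ε / C * C := by gcongr; exact hq z hz
    _ = ε := by field_simp

def DivP (M : Submodule ℂ (ℂ → ℂ)) : Prop :=
  ∀ f ∈ M, ∀ lam ∈ Metric.ball (0:ℂ) 1, f lam = 0 → fdivB lam f ∈ M

lemma aux_div_s11 (M : Submodule ℂ (ℂ → ℂ)) (hM : (M : Set (ℂ → ℂ)) ⊆ HolDisc)
    (hMS : ∀ f ∈ M, shiftL f ∈ M) (hc : ClosedHol M)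
    (hZ : ∀ l ∈ ball (0:ℂ) 1, ∃ f ∈ M, f l ≠ 0) : DivP M := by
  intro f hf l hl h0
  obtain ⟨g, hg, hgl⟩ := hZ l hl
  have hF := aux_fdivB_mem (hM hf) hl
  have h1 := aux_ideal M hM hMS hc hg hF
  have h2 := aux_ideal M hM hMS hc hf (aux_fdivB_mem (hM hg) hl)
  convert M.smul_mem (g l)⁻¹ (M.sub_mem h1 h2) using 1
  funext z
  by_cases hz : z ∈ ball (0:ℂ) 1
  · have e1 := aux_fdivB_eq_s11 f l hz
    have e2 := aux_fdivB_eq_s11 g l hz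
    simp only [Pi.smul_apply, Pi.sub_apply, smul_eq_mul]
    rw [h0, zero_add] at e1
    rw [e1, e2]
    field_simp
    ring
  · simp [hF.2 z hz, (hM hf).2 z hz]

lemma aux_order_ne_top {f : ℂ → ℂ} (hf : f ∈ HolDisc) (hne : f ≠ 0) {l : ℂ}
    (hl : l ∈ ball (0:ℂ) 1) : analyticOrderAt f l ≠ ⊤ := by
  intro h
  rw [analyticOrderAt_eq_top] at h
  apply hne
  funext z
  by_cases hz : z ∈ ball (0:ℂ) 1
  · exact (hf.1.analyticOnNhd isOpen_ball).eqOn_zero_of_preconnected_of_eventuallyEq_zero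
      (convex_ball _ _).isPreconnected hl h hz
  · exact hf.2 z hz

lemma aux_remove (M : Submodule ℂ (ℂ → ℂ)) (hM : (M : Set (ℂ → ℂ)) ⊆ HolDisc) (hD : DivP M)
    {l : ℂ} (hl : l ∈ ball (0:ℂ) 1) (n : ℕ) : ∀ f ∈ M, analyticOrderAt f l = n →
    ∃ h ∈ M, h l ≠ 0 ∧ ∀ z ∈ ball (0:ℂ) 1, f z = (z - l) ^ n * h z := by
  induction n with
  | zero =>
    intro f hf ho
    have ha := (hM hf).1.analyticAt (isOpen_ball.mem_nhds hl)
    exact ⟨f, hf, (ha.analyticOrderAt_eq_zero).mp (by simpa using ho), by simp⟩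
  | succ n ih =>
    intro f hf ho
    have ha := (hM hf).1.analyticAt (isOpen_ball.mem_nhds hl)
    have h0 : f l = 0 := (ha.analyticOrderAt_ne_zero).mp (by rw [ho]; simp)
    have hg := hD f hf l hl h0
    have hga := (hM hg).1.analyticAt (isOpen_ball.mem_nhds hl)
    have he : ∀ z ∈ ball (0:ℂ) 1, f z = (z - l) * fdivB l f z := fun z hz => by
      have := aux_fdivB_eq_s11 f l hz
      rwa [h0, zero_add] at this
    have hee : f =ᶠ[𝓝 l] (fun z => z - l) * fdivB l f := by
      filter_upwards [isOpen_ball.mem_nhds hl] with z hz using he z hz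
    have h1 : analyticOrderAt (fun z : ℂ => z - l) l = 1 := by
      have := analyticOrderAt_centeredMonomial (𝕜 := ℂ) (z₀ := l) (n := 1)
      rw [pow_one] at this
      exact_mod_cast this
    have hord := analyticOrderAt_congr hee
    rw [analyticOrderAt_mul (by fun_prop) hga, h1, ho] at hord
    have hog : analyticOrderAt (fdivB l f) l = n := by
      have : (1 : ℕ∞) + n = 1 + analyticOrderAt (fdivB l f) l := by
        rw [← hord]; push_cast; ring
      exact ((ENat.add_right_injective_of_ne_top (n := 1) (by simp)) this).symm
    obtain ⟨h, hh, hhl, hhe⟩ := ih _ hg hog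
    exact ⟨h, hh, hhl, fun z hz => by rw [he z hz, hhe z hz]; ring⟩

lemma aux_remove_all (M : Submodule ℂ (ℂ → ℂ)) (hM : (M : Set (ℂ → ℂ)) ⊆ HolDisc) (hD : DivP M)
    {K : Set ℂ} (hK : K ⊆ ball (0:ℂ) 1) (s : Finset ℂ) :
    ∀ f ∈ M, f ≠ 0 → (∀ z ∈ K, f z = 0 → z ∈ s) → ∃ h ∈ M, ∀ z ∈ K, h z ≠ 0 := by
  induction s using Finset.induction_on with
  | empty => intro f hf _ h; exact ⟨f, hf, fun z hz h0 => by simpa using h z hz h0⟩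
  | insert a s has ih =>
    intro f hf hne h
    by_cases ha : a ∈ K
    · have ho := aux_order_ne_top (hM hf) hne (hK ha)
      obtain ⟨g, hg, hga, hge⟩ := aux_remove M hM hD (hK ha) _ f hf
        (Nat.cast_analyticOrderNatAt ho).symm
      refine ih g hg (fun h0 => hga (by simp [h0])) fun z hz h0 => ?_
      have := h z hz (by rw [hge z (hK hz), h0, mul_zero])
      rcases Finset.mem_insert.mp this with rfl | h3
      · exact absurd h0 hga
      · exact h3
    · refine ih f hf hne fun z hz h0 => ?_
      rcases Finset.mem_insert.mp (h z hz h0) with rfl | h3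
      · exact absurd hz ha
      · exact h3

lemma aux_finite {f : ℂ → ℂ} (hf : f ∈ HolDisc) (hne : f ≠ 0) {r : ℝ} (hr : r < 1) :
    {z ∈ closedBall (0:ℂ) r | f z = 0}.Finite := by
  by_contra hinf
  obtain ⟨x, hx, hacc⟩ := Set.Infinite.exists_accPt_of_subset_isCompact hinf
    (isCompact_closedBall (0:ℂ) r) (fun z hz => hz.1)
  have hx1 := closedBall_subset_ball hr hx
  refine aux_order_ne_top hf hne hx1 (analyticOrderAt_eq_top.mpr ?_)
  have ha := hf.1.analyticAt (isOpen_ball.mem_nhds hx1)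
  rw [← ha.frequently_zero_iff_eventually_zero]
  rw [accPt_iff_frequently] at hacc
  rw [frequently_nhdsWithin_iff]
  exact hacc.mono fun y hy => ⟨hy.2.2, hy.1⟩

lemma aux_full (M : Submodule ℂ (ℂ → ℂ)) (hM : (M : Set (ℂ → ℂ)) ⊆ HolDisc)
    (hMS : ∀ f ∈ M, shiftL f ∈ M) (hc : ClosedHol M) (hM0 : M ≠ ⊥) (hD : DivP M)
    {g : ℂ → ℂ} (hg : g ∈ HolDisc) : g ∈ M := by
  obtain ⟨f, hf, hne⟩ := M.ne_bot_iff.mp hM0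
  have hone : oneD ∈ M := by
    refine aux_closed M hc ⟨?_, fun z hz => by simp only [oneD, if_neg hz]⟩ ?_
    · exact (differentiableOn_const (1:ℂ)).congr fun z hz => by simp only [oneD, if_pos hz]
    intro r hr0 hr ε hε
    obtain ⟨R, h1, h2⟩ := exists_between hr
    have hfin := aux_finite (hM hf) hne h2
    obtain ⟨h, hh, hhz⟩ := aux_remove_all M hM hD (closedBall_subset_ball h2) hfin.toFinset f hf hne
      (fun z hz h0 => by rw [hfin.mem_toFinset]; exact ⟨hz, h0⟩)
    obtain ⟨C, hC, hb⟩ := aux_bdd (hM hh) hr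
    obtain ⟨q, hq⟩ := aux_poly_approx (F := fun z => (h z)⁻¹)
      (((hM hh).1.mono (closedBall_subset_ball h2)).inv hhz) hr0 h1 (div_pos hε hC)
    refine ⟨_, aux_poly_mul M hMS hh q, fun z hz => ?_⟩
    have hz0 := hhz z (closedBall_subset_closedBall h1.le hz)
    have e : q.eval z * h z - oneD z = (q.eval z - (h z)⁻¹) * h z := by
      simp only [oneD, if_pos (closedBall_subset_ball hr hz)]
      field_simp
    rw [e, norm_mul]
    calc _ ≤ ‖q.eval z - (h z)⁻¹‖ * C := by gcongr; exact hb z hz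
      _ < ε / C * C := by gcongr; exact hq z hz
      _ = ε := by field_simp
  convert aux_ideal M hM hMS hc hone hg using 1
  funext z
  by_cases hz : z ∈ ball (0:ℂ) 1
  · simp only [oneD, if_pos hz, mul_one]
  · simp [hg.2 z hz]

/-- A nontrivial closed `z`-invariant subspace `M` of the Fréchet space
`Hol(𝔻)` (closedness expressed by stability under uniform convergence on compact subsets
of `𝔻`) has `Z(M) ≠ ∅`; in particular it is not zero-free and does not have the division
property. -/
theorem statement11
    (M : Submodule ℂ (ℂ → ℂ)) (hMhol : (M : Set (ℂ → ℂ)) ⊆ HolDisc)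
    (hMS : ∀ f ∈ M, shiftL f ∈ M)
    -- M is closed in Hol(𝔻) for the topology of uniform convergence on compact subsets
    (hMclosed : ∀ (u : ℕ → (ℂ → ℂ)) (g : ℂ → ℂ), (∀ n, u n ∈ M) → g ∈ HolDisc →
      (∀ K : Set ℂ, K ⊆ Metric.ball (0:ℂ) 1 → IsCompact K →
        TendstoUniformlyOn u g Filter.atTop K) → g ∈ M)
    (hM0 : M ≠ ⊥) (hMne : ∃ g ∈ HolDisc, g ∉ M) :
    (∃ lam ∈ Metric.ball (0:ℂ) 1, ∀ f ∈ M, f lam = 0)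
    ∧ ¬ (∀ f ∈ M, ∀ lam ∈ Metric.ball (0:ℂ) 1, f lam = 0 → fdivB lam f ∈ M) := by
  obtain ⟨g, hg, hgM⟩ := hMne
  refine ⟨?_, fun hD => hgM (aux_full M hMhol hMS hMclosed hM0 hD hg)⟩
  by_contra hcon
  push Not at hcon
  exact hgM (aux_full M hMhol hMS hMclosed hM0 (aux_div_s11 M hMhol hMS hMclosed hcon) hg)
end
end
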